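/- For every integer k ≥ 1 there is a constant C_k > 0 such that for all integers R ≥ 1 and all integers n with 0 ≤ n ≤ kR, one has |I_k(n;R) − γ_k(n/R)·R^{k²−1}| ≤ C_k · R^{k²−2}, where for c ∈ [0,k] the constant γ_k(c) is defined by γ_k(c) = (1/(k! · G(1+k)²)) · ∫_{D_c} ∏_{1 ≤ i < j ≤ k} (w_i − w_j)² dw_1⋯dw_{k−1}, where D_c = { (w_1,…,w_{k−1}) ∈ [0,1]^{k−1} : 0 ≤ c − (w_1 + ⋯ + w_{k−1}) ≤ 1 }, w_k is set equal to c − (w_1 + ⋯ + w_{k−1}) in the integrand, and G(1+k) = 1!·2!·⋯·(k−1)!. -/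

import Mathlib

open MeasureTheory Polynomial

noncomputable instance (R : ℕ) : MeasurableSpace (Matrix.unitaryGroup (Fin R) ℂ) := borel _
instance (R : ℕ) : BorelSpace (Matrix.unitaryGroup (Fin R) ℂ) := ⟨rfl⟩

/-- The trace of the `j`-th exterior power of `θ`, i.e. the coefficient of `T^j` in
`det(I + T·θ)`. -/
noncomputable def extPowTrace (R : ℕ) (θ : Matrix.unitaryGroup (Fin R) ℂ) (j : ℕ) : ℂ :=
  ((1 + (X : ℂ[X]) • (θ : Matrix (Fin R) (Fin R) ℂ).map C).det).coeff j

/-- The matrix integral `I_k(n;R)`: the integral over the unitary group `U(R)` of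
`|∑_{n₁+⋯+n_k=n} ∏ᵢ Tr(Λ^{nᵢ} θ)|²`, with respect to the measure `μ` (which in the
theorems below is assumed to be the Haar probability measure). The summands with some
`nᵢ > R` vanish, since `det(I + T·θ)` has degree `R`. -/
noncomputable def matrixIntegral (k n R : ℕ)
    (μ : Measure (Matrix.unitaryGroup (Fin R) ℂ)) : ℝ :=
  ∫ θ, ‖∑ x ∈ Finset.Nat.antidiagonalTuple k n, ∏ i, extPowTrace R θ (x i)‖ ^ 2 ∂μ

/-- The full vector `(w₁, …, w_{k-1}, w_k)` where `w_k := c − (w₁ + ⋯ + w_{k-1})`. -/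
noncomputable def wFull (k : ℕ) (c : ℝ) (w : Fin (k - 1) → ℝ) (j : Fin k) : ℝ :=
  if h : (j : ℕ) < k - 1 then w ⟨j, h⟩ else c - ∑ i, w i

/-- The region `D_c ⊆ [0,1]^{k-1}` on which `w_k = c − (w₁ + ⋯ + w_{k-1})` also lies
in `[0,1]`. -/
def Dregion (k : ℕ) (c : ℝ) : Set (Fin (k - 1) → ℝ) :=
  {w | (∀ i, w i ∈ Set.Icc (0 : ℝ) 1) ∧ c - ∑ i, w i ∈ Set.Icc (0 : ℝ) 1}

/-- `γ_k(c) = (1/(k!·G(1+k)²)) ∫_{D_c} ∏_{i<j} (wᵢ − w_j)² dw₁⋯dw_{k-1}`, with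
`w_k = c − (w₁ + ⋯ + w_{k-1})` and `G(1+k) = 1!·2!⋯(k−1)! = ∏_{i<k} i!`. -/
noncomputable def gammaK (k : ℕ) (c : ℝ) : ℝ :=
  (1 / ((k.factorial : ℝ) * (∏ i ∈ Finset.range k, (Nat.factorial i : ℝ)) ^ 2)) *
    ∫ w in Dregion k c,
      ∏ p ∈ Finset.univ.filter (fun p : Fin k × Fin k => p.1 < p.2),
        (wFull k c w p.1 - wFull k c w p.2) ^ 2

/-!
Write `d_θ(T) = det(1 + Tθ)`. The product `V(a) ∏ᵢ d_θ(aᵢ)`, with `V` the Vandermonde determinant,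
expands into the alternants `alt_m(θ) = det([T^{mᵢ}] T^j d_θ)`.

For `2k` variables, the bi-invariant Laplacian of `det(θ)^{-k} ∏ᵢ det(1 + aᵢθ)` integrates to zero
over `U(R)`; in terms of `m` this says that only exponents with the extremal value of
`∑ᵢ (mᵢ² - (R + 2k - 1) mᵢ)` contribute, and by convexity these are the rearrangements of
`(0, …, k - 1, R + k, …, R + 2k - 1)`. Hence `V(a)` times the mean of the product is a Vandermonde
determinant with a gap, and comparing it with the gapless one shows that the alternants in `k`
variables are orthonormal in `L²(U(R))`, up to the permutations of `m`.

The coefficient of `T^n` in `d_θ^k` is read off the Wronskian of `1, T, …, T^{k-1}` multiplied by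
`d_θ`: by Cauchy–Binet it is a combination of the alternants with `∑ᵢ mᵢ = n + k(k-1)/2` and
coefficients `V(m) / (k! G(1+k))`. By Parseval, `I_k(n;R)` is `(k! G(1+k)²)⁻¹` times the sum of
`V(m)²` over these `m`, and this lattice sum is a Riemann sum, of mesh `1/R`, for the integral
defining `γ_k(n/R)`.
-/

lemma hasDerivAt_prod_of_logDeriv {𝕜 ι : Type*} [NontriviallyNormedField 𝕜] {s : Finset ι}
    {f : ι → 𝕜 → 𝕜} {c : ι → 𝕜} {x : 𝕜} (hf : ∀ i ∈ s, HasDerivAt (f i) (f i x * c i) x) :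
    HasDerivAt (fun y => ∏ i ∈ s, f i y) ((∏ i ∈ s, f i x) * ∑ i ∈ s, c i) x := by
  classical
  refine (HasDerivAt.fun_finsetProd hf).congr_deriv ?_
  rw [Finset.mul_sum]
  refine Finset.sum_congr rfl fun i hi => ?_
  rw [smul_eq_mul, ← mul_assoc, Finset.prod_erase_mul s _ hi]

section MatrixCalculus

open Matrix
open scoped Matrix.Norms.L2Operator

variable {n : Type*} {A : ℂ → Matrix n n ℂ} {A' : Matrix n n ℂ} {z : ℂ}

lemma hasDerivAt_matrix_apply [Finite n] (hA : HasDerivAt A A' z) (i j : n) :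
    HasDerivAt (fun w => A w i j) (A' i j) z := by
  cases nonempty_fintype n
  classical
  exact (Matrix.entryLinearMap ℂ ℂ i j).toContinuousLinearMap.hasFDerivAt.comp_hasDerivAt z hA

variable [Fintype n]

lemma hasDerivAt_matrix_trace (hA : HasDerivAt A A' z) :
    HasDerivAt (fun w => (A w).trace) A'.trace z :=
  HasDerivAt.fun_sum fun i _ => hasDerivAt_matrix_apply hA i i

variable [DecidableEq n]

lemma hasDerivAt_matrix_det (hA : HasDerivAt A A' z) :
    HasDerivAt (fun w => (A w).det) ((A z).adjugate * A').trace z := by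
  simp only [Matrix.det_apply]
  refine (HasDerivAt.fun_sum fun σ _ => (HasDerivAt.fun_finsetProd fun i _ =>
    hasDerivAt_matrix_apply hA (σ i) i).const_smul (Equiv.Perm.sign σ)).congr_deriv ?_
  have hcol (i : n) : ((A z).adjugate * A') i i = ((A z).updateCol i fun j => A' j i).det := by
    rw [← Matrix.cramer_apply, Matrix.cramer_eq_adjugate_mulVec]
    rfl
  simp only [Matrix.trace, Matrix.diag_apply, hcol, Matrix.det_apply, Finset.smul_sum]
  rw [Finset.sum_comm]
  refine Finset.sum_congr rfl fun i _ => Finset.sum_congr rfl fun σ _ => ?_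
  rw [← Finset.prod_erase_mul _ _ (Finset.mem_univ i), Matrix.updateCol_self, smul_eq_mul]
  congr 2
  exact Finset.prod_congr rfl fun j hj => (Matrix.updateCol_ne (Finset.ne_of_mem_erase hj)).symm

lemma hasDerivAt_matrix_inv (hA : HasDerivAt A A' z) (hu : IsUnit (A z).det) :
    HasDerivAt (fun w => (A w)⁻¹) (-((A z)⁻¹ * A' * (A z)⁻¹)) z := by
  obtain ⟨u, hu'⟩ := (Matrix.isUnit_iff_isUnit_det _).mpr hu
  have h := hasFDerivAt_ringInverse (𝕜 := ℂ) u
  rw [hu'] at h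
  simp only [Matrix.nonsing_inv_eq_ringInverse]
  refine (h.comp_hasDerivAt z hA).congr_deriv ?_
  simp [← hu']

end MatrixCalculus

section TraceIdentities

open Matrix

variable {n S : Type*} [Fintype n] [DecidableEq n] [CommSemiring S]

lemma sum_trace_mul_single_mul_trace_mul_single (A B : Matrix n n S) :
    ∑ p, ∑ q, (A * single p q 1).trace * (B * single q p 1).trace = (A * B).trace := by
  simp only [trace_mul_single, MulOpposite.op_one, one_smul]
  simp only [Matrix.trace, diag_apply, mul_apply]
  exact Finset.sum_comm

lemma sum_trace_mul_single_mul_mul_single (A B : Matrix n n S) :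
    ∑ p, ∑ q, (A * single p q 1 * B * single q p 1).trace = A.trace * B.trace := by
  simp [mul_apply, single_apply, ite_and, Matrix.trace, Finset.sum_mul_sum]

end TraceIdentities

section LogResolvent

open Matrix
open scoped Matrix.Norms.L2Operator

variable {n : Type*} [Fintype n] [DecidableEq n]

/-- The matrix `aA(1 + aA)⁻¹`, that is `a ∂/∂a` applied to `log (1 + aA)`. It is written as
`1 - (1 + aA)⁻¹`, which agrees with it only when `1 + aA` is invertible. -/
noncomputable def logResolvent (a : ℂ) (A : Matrix n n ℂ) : Matrix n n ℂ := 1 - (1 + a • A)⁻¹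

lemma smul_mul_inv_eq_logResolvent {a : ℂ} {A : Matrix n n ℂ} (h : IsUnit (1 + a • A).det) :
    (a • A) * (1 + a • A)⁻¹ = logResolvent a A := by
  have hinv := Matrix.mul_nonsing_inv _ h
  rw [add_mul, one_mul] at hinv
  exact eq_sub_of_add_eq' hinv

variable {γ : ℂ → Matrix n n ℂ} {X : Matrix n n ℂ} {z : ℂ}

lemma hasDerivAt_det_flow (hγ : HasDerivAt γ (X * γ z) z) :
    HasDerivAt (fun w => (γ w).det) ((γ z).det * X.trace) z := by
  refine (hasDerivAt_matrix_det hγ).congr_deriv ?_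
  rw [Matrix.trace_mul_comm, Matrix.mul_assoc, Matrix.mul_adjugate, Matrix.mul_smul, mul_one,
    Matrix.trace_smul, smul_eq_mul]

lemma hasDerivAt_inv_det_pow_flow (k : ℕ) (hγ : HasDerivAt γ (X * γ z) z)
    (hu : IsUnit (γ z).det) :
    HasDerivAt (fun w => (γ w).det⁻¹ ^ k) ((γ z).det⁻¹ ^ k * -(k * X.trace)) z := by
  have hinv : HasDerivAt (fun w => (γ w).det⁻¹) ((γ z).det⁻¹ * -X.trace) z := by
    refine ((hasDerivAt_det_flow hγ).fun_inv hu.ne_zero).congr_deriv ?_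
    field_simp [hu.ne_zero]
  simpa using hasDerivAt_prod_of_logDeriv (s := Finset.range k) fun _ _ => hinv

lemma hasDerivAt_det_one_add_smul_flow {a : ℂ} (hγ : HasDerivAt γ (X * γ z) z)
    (hu : IsUnit (1 + a • γ z).det) :
    HasDerivAt (fun w => (1 + a • γ w).det)
      ((1 + a • γ z).det * (logResolvent a (γ z) * X).trace) z := by
  refine (hasDerivAt_matrix_det ((hγ.fun_const_smul a).const_add 1)).congr_deriv ?_
  have hadj : (1 + a • γ z).adjugate = (1 + a • γ z).det • (1 + a • γ z)⁻¹ := by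
    rw [Matrix.inv_def, smul_smul, Ring.mul_inverse_cancel _ hu, one_smul]
  rw [hadj, Matrix.smul_mul, Matrix.trace_smul, smul_eq_mul, ← smul_mul_inv_eq_logResolvent hu,
    ← Matrix.mul_smul, Matrix.trace_mul_comm, Matrix.mul_assoc, Matrix.trace_mul_comm]

lemma hasDerivAt_logResolvent_flow {a : ℂ} (hγ : HasDerivAt γ (X * γ z) z)
    (hu : IsUnit (1 + a • γ z).det) :
    HasDerivAt (fun w => logResolvent a (γ w))
      ((1 - logResolvent a (γ z)) * X * logResolvent a (γ z)) z := by
  refine ((hasDerivAt_matrix_inv ((hγ.fun_const_smul a).const_add 1) hu).const_sub 1).congr_deriv ?_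
  rw [neg_neg, ← Matrix.mul_smul, Matrix.mul_assoc, Matrix.mul_assoc,
    smul_mul_inv_eq_logResolvent hu, ← Matrix.mul_assoc]
  simp [logResolvent]

variable {ι : Type*} [Fintype ι]

/-- The class function `det(A)⁻ᵏ ∏ᵢ det(1 + aᵢA)`. On the unitary group the factor `det(A)⁻ᵏ`
turns `k` of the characteristic polynomials into complex conjugates. -/
noncomputable def charProduct (k : ℕ) (a : ι → ℂ) (A : Matrix n n ℂ) : ℂ :=
  A.det⁻¹ ^ k * ∏ i, (1 + a i • A).det

/-- The matrix `∑ᵢ aᵢA(1 + aᵢA)⁻¹ - k`, the logarithmic gradient of `charProduct`. -/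
noncomputable def logGradient (k : ℕ) (a : ι → ℂ) (A : Matrix n n ℂ) : Matrix n n ℂ :=
  ∑ i, logResolvent (a i) A - (k : ℂ) • 1

/-- The second derivative of `charProduct` along the flows `A ↦ exp (tY)A` and `A ↦ exp (tX)A`. -/
noncomputable def secondLeftDeriv (k : ℕ) (a : ι → ℂ) (X Y A : Matrix n n ℂ) : ℂ :=
  charProduct k a A * ((logGradient k a A * X).trace * (logGradient k a A * Y).trace +
    ∑ i, ((1 - logResolvent (a i) A) * X * logResolvent (a i) A * Y).trace)

lemma hasDerivAt_charProduct_flow (k : ℕ) {a : ι → ℂ} (hγ : HasDerivAt γ (X * γ z) z)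
    (hz : IsUnit (γ z).det) (hu : ∀ i, IsUnit (1 + a i • γ z).det) :
    HasDerivAt (fun w => charProduct k a (γ w))
      (charProduct k a (γ z) * (logGradient k a (γ z) * X).trace) z := by
  refine ((hasDerivAt_inv_det_pow_flow k hγ hz).mul (hasDerivAt_prod_of_logDeriv
    fun i _ => hasDerivAt_det_one_add_smul_flow hγ (hu i))).congr_deriv ?_
  simp only [charProduct, logGradient, Matrix.sub_mul, Matrix.trace_sub, Matrix.sum_mul,
    Matrix.trace_sum, Matrix.smul_mul, one_mul, Matrix.trace_smul, smul_eq_mul]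
  ring

lemma hasDerivAt_charProduct_mul_trace_flow (k : ℕ) {a : ι → ℂ} (Y : Matrix n n ℂ)
    (hγ : HasDerivAt γ (X * γ z) z) (hz : IsUnit (γ z).det)
    (hu : ∀ i, IsUnit (1 + a i • γ z).det) :
    HasDerivAt (fun w => charProduct k a (γ w) * (logGradient k a (γ w) * Y).trace)
      (secondLeftDeriv k a X Y (γ z)) z := by
  have hgrad : HasDerivAt (fun w => logGradient k a (γ w))
      (∑ i, (1 - logResolvent (a i) (γ z)) * X * logResolvent (a i) (γ z)) z :=
    (HasDerivAt.fun_sum fun i _ => hasDerivAt_logResolvent_flow hγ (hu i)).sub_const _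
  refine ((hasDerivAt_charProduct_flow k hγ hz hu).mul
    (hasDerivAt_matrix_trace (hgrad.mul_const Y))).congr_deriv ?_
  simp only [secondLeftDeriv, Matrix.sum_mul, Matrix.trace_sum]
  ring

lemma secondLeftDeriv_smul_add_smul (k : ℕ) (a : ι → ℂ) (c c' : ℂ) (X X' Y A : Matrix n n ℂ) :
    secondLeftDeriv k a (c • X + c' • X') Y A =
      c * secondLeftDeriv k a X Y A + c' * secondLeftDeriv k a X' Y A := by
  simp only [secondLeftDeriv, Matrix.mul_add, Matrix.add_mul, Matrix.mul_smul, Matrix.smul_mul,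
    Matrix.trace_add, Matrix.trace_smul, smul_eq_mul, Finset.sum_add_distrib, ← Finset.mul_sum]
  ring

lemma sum_secondLeftDeriv_single (k : ℕ) (a : ι → ℂ) (A : Matrix n n ℂ) :
    ∑ p, ∑ q, secondLeftDeriv k a (single p q 1) (single q p 1) A =
      charProduct k a A * ((logGradient k a A * logGradient k a A).trace +
        ∑ i, (1 - logResolvent (a i) A).trace * (logResolvent (a i) A).trace) := by
  rw [← sum_trace_mul_single_mul_trace_mul_single]
  simp only [secondLeftDeriv, mul_add, Finset.mul_sum, Finset.sum_add_distrib,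
    ← sum_trace_mul_single_mul_mul_single]
  congr 1
  exact (Finset.sum_congr rfl fun _ _ => Finset.sum_comm).trans Finset.sum_comm

end LogResolvent

section HaarIntegral

lemma integrable_of_continuous_of_compactSpace {G E : Type*} [TopologicalSpace G] [CompactSpace G]
    [MeasurableSpace G] [OpensMeasurableSpace G] [NormedAddCommGroup E] {μ : Measure G}
    [IsFiniteMeasureOnCompacts μ] {f : G → E} (hf : Continuous f) : Integrable f μ :=
  hf.integrable_of_hasCompactSupport (HasCompactSupport.of_compactSpace f)

lemma integral_eq_zero_of_hasDerivAt_mul_left {G E : Type*} [Group G] [TopologicalSpace G]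
    [IsTopologicalGroup G] [CompactSpace G] [MeasurableSpace G] [BorelSpace G]
    [NormedAddCommGroup E] [NormedSpace ℝ E] {μ : Measure G} [IsFiniteMeasure μ]
    [μ.IsMulLeftInvariant] {u : ℝ → G} {f g : G → E} (hf : Continuous f) (hg : Continuous g)
    (hfg : ∀ x t, HasDerivAt (fun s => f (u s * x)) (g (u t * x)) t) : ∫ x, g x ∂μ = 0 := by
  obtain ⟨K, hK⟩ := isCompact_univ.exists_bound_of_continuousOn hg.continuousOn
  have hmul (t : ℝ) : Continuous fun x => u t * x := continuous_const_mul (u t)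
  have hderiv := (hasDerivAt_integral_of_dominated_loc_of_deriv_le (μ := μ) (x₀ := (0 : ℝ))
    (F := fun t x => f (u t * x)) (F' := fun t x => g (u t * x)) (bound := fun _ => K)
    Filter.univ_mem
    (.of_forall fun t =>
      (integrable_of_continuous_of_compactSpace (hf.comp (hmul t))).aestronglyMeasurable)
    (integrable_of_continuous_of_compactSpace (hf.comp (hmul 0)))
    (integrable_of_continuous_of_compactSpace (hg.comp (hmul 0))).aestronglyMeasurable
    (.of_forall fun x t _ => hK _ (Set.mem_univ _)) (integrable_const K)
    (.of_forall fun x t _ => hfg x t)).2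
  simp only [integral_mul_left_eq_self] at hderiv
  exact hderiv.unique (hasDerivAt_const 0 _)

end HaarIntegral

section UnitaryGroup

open Matrix
open scoped Matrix.Norms.L2Operator

variable {n : Type*} [Fintype n] [DecidableEq n]

lemma norm_le_one_of_mem_unitaryGroup {U : Matrix n n ℂ} (hU : U ∈ unitaryGroup n ℂ) :
    ‖U‖ ≤ 1 := by
  rcases subsingleton_or_nontrivial (Matrix n n ℂ) with h | h
  · simp [Subsingleton.elim U 0]
  · exact (CStarRing.norm_of_mem_unitary hU).le

instance compactSpace_unitaryGroup : CompactSpace (unitaryGroup n ℂ) :=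
  isCompact_iff_compactSpace.mp (Metric.isCompact_of_isClosed_isBounded isClosed_unitary
    (isBounded_iff_forall_norm_le.mpr ⟨1, fun _ => norm_le_one_of_mem_unitaryGroup⟩))

lemma isUnit_det_unitaryGroup (θ : unitaryGroup n ℂ) : IsUnit θ.1.det :=
  (Matrix.isUnit_iff_isUnit_det _).mp ⟨Unitary.toUnits θ, rfl⟩

lemma isUnit_det_one_add_smul {a : ℂ} (ha : ‖a‖ < 1) (θ : unitaryGroup n ℂ) :
    IsUnit (1 + a • θ.1).det := by
  have hnorm : ‖-(a • θ.1)‖ < 1 := by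
    rw [norm_neg, norm_smul]
    exact (mul_le_of_le_one_right (norm_nonneg a) (norm_le_one_of_mem_unitaryGroup θ.2)).trans_lt ha
  rw [← Matrix.isUnit_iff_isUnit_det]
  simpa using isUnit_one_sub_of_norm_lt_one hnorm

/-- The one-parameter group `t ↦ exp (tX)` of unitary matrices generated by a skew-adjoint
matrix `X`. -/
noncomputable def unitaryExp {X : Matrix n n ℂ} (hX : X ∈ skewAdjoint (Matrix n n ℂ)) (t : ℝ) :
    unitaryGroup n ℂ :=
  letI : NormedAlgebra ℚ (Matrix n n ℂ) := NormedAlgebra.restrictScalars ℚ ℂ _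
  ⟨NormedSpace.exp ((t : ℂ) • X), NormedSpace.exp_mem_unitary_of_mem_skewAdjoint <| by
    rw [skewAdjoint.mem_iff] at hX ⊢
    simp [hX]⟩

variable {ι : Type*} [Fintype ι]

lemma continuous_charProduct (k : ℕ) (a : ι → ℂ) :
    Continuous fun θ : unitaryGroup n ℂ => charProduct k a θ.1 := by
  have hinv : Continuous fun θ : unitaryGroup n ℂ => θ.1.det⁻¹ :=
    continuous_subtype_val.matrix_det.inv₀ fun θ => (isUnit_det_unitaryGroup θ).ne_zero
  have hdet (i : ι) : Continuous fun θ : unitaryGroup n ℂ => (1 + a i • θ.1).det :=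
    Continuous.matrix_det (by fun_prop)
  exact (hinv.pow k).mul (continuous_finsetProd _ fun i _ => hdet i)

lemma continuous_logResolvent {a : ℂ} (ha : ‖a‖ < 1) :
    Continuous fun θ : unitaryGroup n ℂ => logResolvent a θ.1 := by
  have hadd : Continuous fun θ : unitaryGroup n ℂ => 1 + a • θ.1 := by fun_prop
  simp only [logResolvent, Matrix.inv_def, Ring.inverse_eq_inv']
  exact continuous_const.sub ((hadd.matrix_det.inv₀ fun θ =>
    (isUnit_det_one_add_smul ha θ).ne_zero).smul hadd.matrix_adjugate)

lemma continuous_logGradient (k : ℕ) {a : ι → ℂ} (ha : ∀ i, ‖a i‖ < 1) :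
    Continuous fun θ : unitaryGroup n ℂ => logGradient k a θ.1 :=
  (continuous_finsetSum _ fun i _ => continuous_logResolvent (ha i)).sub continuous_const

lemma continuous_secondLeftDeriv (k : ℕ) {a : ι → ℂ} (ha : ∀ i, ‖a i‖ < 1) (X Y : Matrix n n ℂ) :
    Continuous fun θ : unitaryGroup n ℂ => secondLeftDeriv k a X Y θ.1 := by
  have hgrad (Z : Matrix n n ℂ) := ((continuous_logGradient k ha).mul
    (continuous_const (y := Z))).matrix_trace
  have hres (i : ι) := continuous_logResolvent (n := n) (ha i)
  exact (continuous_charProduct k a).mul (((hgrad X).mul (hgrad Y)).add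
    (continuous_finsetSum _ fun i _ => ((((continuous_const.sub (hres i)).mul
      continuous_const).mul (hres i)).mul continuous_const).matrix_trace))

end UnitaryGroup

section Casimir

open Matrix
open scoped Matrix.Norms.L2Operator

variable {R : ℕ} {ι : Type*} [Fintype ι] (μ : Measure (unitaryGroup (Fin R) ℂ)) [μ.IsHaarMeasure]
  [IsProbabilityMeasure μ]

lemma integral_secondLeftDeriv_of_mem_skewAdjoint (k : ℕ) {a : ι → ℂ} (ha : ∀ i, ‖a i‖ < 1)
    {X : Matrix (Fin R) (Fin R) ℂ} (hX : X ∈ skewAdjoint (Matrix (Fin R) (Fin R) ℂ))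
    (Y : Matrix (Fin R) (Fin R) ℂ) : ∫ θ, secondLeftDeriv k a X Y θ.1 ∂μ = 0 := by
  refine integral_eq_zero_of_hasDerivAt_mul_left (u := unitaryExp hX)
    (f := fun θ => charProduct k a θ.1 * (logGradient k a θ.1 * Y).trace)
    ((continuous_charProduct k a).mul
      ((continuous_logGradient k ha).mul continuous_const).matrix_trace)
    (continuous_secondLeftDeriv k ha X Y) fun θ t => ?_
  have hflow : HasDerivAt (fun z : ℂ => NormedSpace.exp (z • X) * θ.1)
      (X * (unitaryExp hX t * θ).1) t := by
    have hexp := (hasDerivAt_exp_smul_const' X (t : ℂ)).mul_const θ.1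
    rw [mul_assoc] at hexp
    exact hexp
  exact (hasDerivAt_charProduct_mul_trace_flow k Y hflow
    (isUnit_det_unitaryGroup (unitaryExp hX t * θ))
    fun i => isUnit_det_one_add_smul (ha i) (unitaryExp hX t * θ)).comp_ofReal

lemma integral_secondLeftDeriv (k : ℕ) {a : ι → ℂ} (ha : ∀ i, ‖a i‖ < 1)
    (X Y : Matrix (Fin R) (Fin R) ℂ) : ∫ θ, secondLeftDeriv k a X Y θ.1 ∂μ = 0 := by
  have hX : X = (1 / 2 : ℂ) • (X - star X) +
      (-Complex.I / 2) • (Complex.I • (X + star X)) := by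
    rw [smul_smul, div_mul_eq_mul_div, neg_mul, Complex.I_mul_I, neg_neg]
    module
  have hint (Z : Matrix (Fin R) (Fin R) ℂ) :
      Integrable (fun θ : unitaryGroup (Fin R) ℂ => secondLeftDeriv k a Z Y θ.1) μ :=
    integrable_of_continuous_of_compactSpace (continuous_secondLeftDeriv k ha Z Y)
  have hsub : X - star X ∈ skewAdjoint (Matrix (Fin R) (Fin R) ℂ) := by
    simp [skewAdjoint.mem_iff]
  have hadd : Complex.I • (X + star X) ∈ skewAdjoint (Matrix (Fin R) (Fin R) ℂ) := by
    simp [skewAdjoint.mem_iff, add_comm]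
  rw [hX]
  simp only [secondLeftDeriv_smul_add_smul]
  rw [integral_add ((hint _).const_mul _) ((hint _).const_mul _), integral_const_mul,
    integral_const_mul, integral_secondLeftDeriv_of_mem_skewAdjoint μ k ha hsub,
    integral_secondLeftDeriv_of_mem_skewAdjoint μ k ha hadd, mul_zero, mul_zero, add_zero]

lemma integral_casimir_charProduct (k : ℕ) {a : ι → ℂ} (ha : ∀ i, ‖a i‖ < 1) :
    ∫ θ : unitaryGroup (Fin R) ℂ, charProduct k a θ.1 *
      ((logGradient k a θ.1 * logGradient k a θ.1).trace +
        ∑ i, (1 - logResolvent (a i) θ.1).trace * (logResolvent (a i) θ.1).trace) ∂μ = 0 := by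
  have hint (p q : Fin R) : Integrable (fun θ : unitaryGroup (Fin R) ℂ =>
      secondLeftDeriv k a (single p q 1) (single q p 1) θ.1) μ :=
    integrable_of_continuous_of_compactSpace (continuous_secondLeftDeriv k ha _ _)
  simp only [← sum_secondLeftDeriv_single]
  rw [integral_finsetSum _ fun p _ => integrable_finsetSum _ fun q _ => hint p q]
  refine Finset.sum_eq_zero fun p _ => ?_
  rw [integral_finsetSum _ fun q _ => hint p q]
  exact Finset.sum_eq_zero fun q _ => integral_secondLeftDeriv μ k ha _ _

end Casimir

section RevCharpoly

open Matrix
open scoped Matrix.Norms.L2Operator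

/-- The Euler operator `X · d/dX` on polynomials. -/
noncomputable def euler {S : Type*} [CommSemiring S] : Module.End S S[X] :=
  LinearMap.mulLeft S X ∘ₗ derivative

lemma euler_apply {S : Type*} [CommSemiring S] (p : S[X]) : euler p = X * derivative p := rfl

lemma coeff_euler {S : Type*} [CommSemiring S] (p : S[X]) (r : ℕ) :
    (euler p).coeff r = r * p.coeff r := by
  cases r with
  | zero => simp [euler_apply]
  | succ r => rw [euler_apply, coeff_X_mul, coeff_derivative, mul_comm, Nat.cast_succ]

lemma euler_X_pow_mul {S : Type*} [CommSemiring S] (j : ℕ) (p : S[X]) :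
    euler (X ^ j * p) = X ^ j * (euler p + j • p) := by
  cases j with
  | zero => simp
  | succ j =>
    simp only [euler_apply, derivative_mul, derivative_X_pow, map_natCast, Nat.add_sub_cancel,
      nsmul_eq_mul]
    ring

lemma natDegree_euler_le {S : Type*} [CommSemiring S] (p : S[X]) :
    (euler p).natDegree ≤ p.natDegree :=
  natDegree_le_iff_coeff_eq_zero.mpr fun r hr => by
    rw [coeff_euler, coeff_eq_zero_of_natDegree_lt hr, mul_zero]

lemma hasDerivAt_eval_mul (p : ℂ[X]) (a : ℂ) :
    HasDerivAt (fun z => p.eval (z * a)) ((euler p).eval a) 1 := by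
  have h := (p.hasDerivAt (1 * a)).comp 1 ((hasDerivAt_id (1 : ℂ)).mul_const a)
  simpa [euler_apply, Function.comp_def, mul_comm] using h

variable {n : Type*} [Fintype n] [DecidableEq n]

/-- The polynomial `det(1 + X A)`. -/
noncomputable def revCharpoly {S : Type*} [CommRing S] (A : Matrix n n S) : S[X] :=
  (1 + (X : S[X]) • A.map C).det

lemma eval_revCharpoly {S : Type*} [CommRing S] (A : Matrix n n S) (a : S) :
    (revCharpoly A).eval a = (1 + a • A).det := by
  rw [revCharpoly, ← Polynomial.coe_evalRingHom, RingHom.map_det]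
  congr 1
  ext i j
  simp [Matrix.one_apply, apply_ite, mul_comm a]

variable {A : Matrix n n ℂ} {a b : ℂ}

lemma hasDerivAt_smul_flow (A : Matrix n n ℂ) :
    HasDerivAt (fun z : ℂ => z • A) (1 * (1 : ℂ) • A) 1 := by
  simpa using (hasDerivAt_id (1 : ℂ)).smul_const A

lemma eval_euler_revCharpoly (h : IsUnit (1 + a • A).det) :
    (euler (revCharpoly A)).eval a = (revCharpoly A).eval a * (logResolvent a A).trace := by
  have hflow := hasDerivAt_det_one_add_smul_flow (a := a) (hasDerivAt_smul_flow A)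
    (by simpa using h)
  refine (hasDerivAt_eval_mul (revCharpoly A) a).unique ?_
  simpa [eval_revCharpoly, smul_smul, mul_comm a] using hflow

lemma eval_euler_euler_revCharpoly (h : IsUnit (1 + a • A).det) :
    (euler (euler (revCharpoly A))).eval a =
      (revCharpoly A).eval a * ((logResolvent a A).trace ^ 2 + (logResolvent a A).trace -
        (logResolvent a A * logResolvent a A).trace) := by
  have hunit : ∀ᶠ z : ℂ in nhds 1, IsUnit (1 + (z * a) • A).det := by
    have hcont : Continuous fun z : ℂ => (1 + (z * a) • A).det := by fun_prop
    filter_upwards [hcont.continuousAt.eventually_ne (by simpa using h.ne_zero)] with z hz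
    exact hz.isUnit
  have hlog (z : ℂ) : logResolvent a (z • A) = logResolvent (z * a) A := by
    rw [logResolvent, logResolvent, smul_smul, mul_comm]
  have hflow := (hasDerivAt_eval_mul (revCharpoly A) a).mul (hasDerivAt_matrix_trace
    (hasDerivAt_logResolvent_flow (a := a) (hasDerivAt_smul_flow A) (by simpa using h)))
  have hder := (hasDerivAt_eval_mul (euler (revCharpoly A)) a).congr_of_eventuallyEq
    (f₁ := fun z => (revCharpoly A).eval (z * a) * (logResolvent a (z • A)).trace) (by
      filter_upwards [hunit] with z hz
      rw [eval_euler_revCharpoly hz, hlog])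
  rw [hder.unique hflow, eval_euler_revCharpoly h]
  simp only [one_smul, one_mul, mul_one, sub_mul, Matrix.trace_sub]
  ring

lemma sub_mul_trace_logResolvent_mul (ha : IsUnit (1 + a • A).det)
    (hb : IsUnit (1 + b • A).det) :
    (b - a) * (logResolvent a A * logResolvent b A).trace =
      b * (logResolvent a A).trace - a * (logResolvent b A).trace := by
  have hresolvent : b • (1 + b • A)⁻¹ - a • (1 + a • A)⁻¹ =
      (b - a) • ((1 + a • A)⁻¹ * (1 + b • A)⁻¹) := by
    calc b • (1 + b • A)⁻¹ - a • (1 + a • A)⁻¹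
        = b • ((1 + a • A)⁻¹ * (1 + a • A) * (1 + b • A)⁻¹) -
            a • ((1 + a • A)⁻¹ * ((1 + b • A) * (1 + b • A)⁻¹)) := by
          rw [Matrix.nonsing_inv_mul _ ha, Matrix.mul_nonsing_inv _ hb, one_mul, mul_one]
      _ = _ := by
          simp only [mul_add, add_mul, mul_one, one_mul, Matrix.smul_mul, Matrix.mul_smul,
            mul_assoc]
          module
  have htrace := congrArg Matrix.trace hresolvent
  simp only [Matrix.trace_sub, Matrix.trace_smul, smul_eq_mul] at htrace
  simp only [logResolvent, sub_mul, mul_sub, mul_one, one_mul, Matrix.trace_sub]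
  linear_combination -htrace

lemma trace_logGradient_mul_self {ι : Type*} [Fintype ι] (k : ℕ) (a : ι → ℂ) (A : Matrix n n ℂ) :
    (logGradient k a A * logGradient k a A).trace =
      ∑ i, ∑ j, (logResolvent (a i) A * logResolvent (a j) A).trace -
        2 * k * ∑ i, (logResolvent (a i) A).trace + k ^ 2 * Fintype.card n := by
  simp only [logGradient, sub_mul, mul_sub, Matrix.trace_sub, Finset.sum_mul, Finset.mul_sum,
    Matrix.trace_sum, Matrix.smul_mul, Matrix.mul_smul, one_mul, mul_one, Matrix.trace_smul,
    Matrix.trace_one, smul_eq_mul]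
  rw [Finset.sum_comm]
  simp only [mul_assoc, Finset.sum_sub_distrib, ← Finset.mul_sum]
  ring

end RevCharpoly

section Alternant

open Matrix

variable {N R : ℕ}

lemma det_vandermonde_eq_sum_perm {S : Type*} [CommRing S] (a : Fin N → S) :
    (vandermonde a).det =
      ∑ σ : Equiv.Perm (Fin N), ((Equiv.Perm.sign σ : ℤ) : S) * ∏ i, a i ^ (σ i : ℕ) := by
  rw [← Matrix.det_transpose, Matrix.det_apply']
  rfl

/-- The logarithmic derivative of the Vandermonde determinant along the curve `aᵢ + z aᵢ tᵢ`. -/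
lemma sum_perm_mul_sum_eq_det_vandermonde_mul {𝕜 : Type*} [NontriviallyNormedField 𝕜]
    {a t : Fin N → 𝕜} {q : Fin N → Fin N → 𝕜}
    (hq : ∀ i j, a j * t j - a i * t i = (a j - a i) * q i j) :
    ∑ σ : Equiv.Perm (Fin N), ((Equiv.Perm.sign σ : ℤ) : 𝕜) *
        ((∏ i, a i ^ (σ i : ℕ)) * ∑ i, (σ i : 𝕜) * t i) =
      (vandermonde a).det * ∑ i, ∑ j ∈ Finset.Ioi i, q i j := by
  set γ : Fin N → 𝕜 → 𝕜 := fun i z => a i + z * (a i * t i) with hγ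
  have hγ0 (i : Fin N) : γ i 0 = a i := by simp [hγ]
  have hlin (i : Fin N) : HasDerivAt (γ i) (a i * t i) 0 := by
    simpa [hγ] using ((hasDerivAt_id (0 : 𝕜)).mul_const (a i * t i)).const_add (a i)
  have hpow (i : Fin N) (r : ℕ) : HasDerivAt (fun z => γ i z ^ r) (γ i 0 ^ r * (r * t i)) 0 := by
    have h := hasDerivAt_prod_of_logDeriv (s := Finset.range r) (f := fun _ => γ i)
      (c := fun _ => t i) (x := 0) fun _ _ => by rw [hγ0]; exact hlin i
    simpa using h
  have hsum : HasDerivAt (fun z => (vandermonde fun i => γ i z).det) _ 0 :=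
    (HasDerivAt.fun_sum fun σ _ => (hasDerivAt_prod_of_logDeriv (s := Finset.univ)
      fun i _ => hpow i (σ i)).const_mul ((Equiv.Perm.sign σ : ℤ) : 𝕜)).congr_of_eventuallyEq
      (.of_forall fun z => det_vandermonde_eq_sum_perm fun i => γ i z)
  have hprod : HasDerivAt (fun z => (vandermonde fun i => γ i z).det) _ 0 :=
    (hasDerivAt_prod_of_logDeriv (s := Finset.univ) fun i _ =>
      hasDerivAt_prod_of_logDeriv (s := Finset.Ioi i) (f := fun j z => γ j z - γ i z)
        (c := q i) fun j _ => by
          rw [hγ0, hγ0, ← hq]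
          exact (hlin j).sub (hlin i)).congr_of_eventuallyEq
      (.of_forall fun z => Matrix.det_vandermonde fun i => γ i z)
  simpa only [hγ0, ← Matrix.det_vandermonde] using hsum.unique hprod

/-- The determinant of the coefficients `[X^{mᵢ}] Xʲ d`, i.e. the coefficient of `∏ᵢ aᵢ^{mᵢ}` in
the product of the Vandermonde determinant of `a` with `∏ᵢ d(aᵢ)`. -/
noncomputable def alternant {S : Type*} [CommRing S] (d : S[X]) (m : Fin N → ℕ) : S :=
  (Matrix.of fun j i : Fin N => (X ^ (j : ℕ) * d).coeff (m i)).det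

lemma alternant_eq_sum_perm {S : Type*} [CommRing S] (d : S[X]) (m : Fin N → ℕ) :
    alternant d m = ∑ σ : Equiv.Perm (Fin N), ((Equiv.Perm.sign σ : ℤ) : S) *
      ∏ i, (X ^ (σ i : ℕ) * d).coeff (m i) := by
  rw [alternant, Matrix.det_apply']
  rfl

lemma natDegree_X_pow_mul_lt {S : Type*} [Semiring S] {d : S[X]} (hd : d.natDegree ≤ R)
    (j : Fin N) : (X ^ (j : ℕ) * d).natDegree < R + N := by
  have := natDegree_mul_le_of_le (natDegree_X_pow_le (R := S) (j : ℕ)) hd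
  omega

lemma sum_fin_coeff_mul_pow {S : Type*} [CommSemiring S] {p : S[X]} {n : ℕ} (hp : p.natDegree < n)
    (a : S) : ∑ r : Fin n, p.coeff r * a ^ (r : ℕ) = p.eval a := by
  rw [Fin.sum_univ_eq_sum_range fun r => p.coeff r * a ^ r, ← eval_eq_sum_range' hp]

lemma sum_fin_weight_mul_coeff_mul_pow {S : Type*} [CommRing S] {p : S[X]} {n : ℕ}
    (hp : p.natDegree < n) (c a : S) :
    ∑ r : Fin n, ((r : S) ^ 2 - c * r) * (p.coeff r * a ^ (r : ℕ)) =
      (euler (euler p)).eval a - c * (euler p).eval a := by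
  have hp1 := (natDegree_euler_le p).trans_lt hp
  rw [← sum_fin_coeff_mul_pow hp1, ← sum_fin_coeff_mul_pow ((natDegree_euler_le _).trans_lt hp1),
    Finset.mul_sum, ← Finset.sum_sub_distrib]
  refine Finset.sum_congr rfl fun r _ => ?_
  rw [coeff_euler, coeff_euler]
  ring

lemma sum_pi_prod {ι κ S : Type*} [Fintype ι] [DecidableEq ι] [Fintype κ] [CommSemiring S]
    (f : ι → κ → S) : ∑ m : ι → κ, ∏ i, f i (m i) = ∏ i, ∑ r, f i r := by
  rw [Finset.prod_univ_sum, Fintype.piFinset_univ]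

lemma sum_pi_weight_mul_prod {ι κ S : Type*} [Fintype ι] [DecidableEq ι] [Fintype κ]
    [CommSemiring S] (f : ι → κ → S) (w : κ → S) {F s : ι → S} (hF : ∀ i, ∑ r, f i r = F i)
    (hs : ∀ i, ∑ r, w r * f i r = F i * s i) :
    ∑ m : ι → κ, (∑ i, w (m i)) * ∏ i, f i (m i) = (∏ i, F i) * ∑ i, s i := by
  simp only [Finset.sum_mul]
  rw [Finset.sum_comm, Finset.mul_sum]
  refine Finset.sum_congr rfl fun i _ => ?_
  have hsplit (m : ι → κ) : w (m i) * ∏ j, f j (m j) =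
      ∏ j, (if j = i then w (m j) else 1) * f j (m j) := by
    rw [Finset.prod_mul_distrib, Finset.prod_ite_eq' Finset.univ i fun j => w (m j)]
    simp
  have hfactor (j : ι) : ∑ r, (if j = i then w r else 1) * f j r =
      F j * if j = i then s j else 1 := by
    split_ifs
    · exact hs j
    · simp [hF]
  simp only [hsplit]
  rw [sum_pi_prod fun j r => (if j = i then w r else 1) * f j r, Finset.prod_congr rfl
    fun j _ => hfactor j, Finset.prod_mul_distrib]
  simp

lemma sum_alternant {S : Type*} [CommRing S] {d : S[X]} (hd : d.natDegree ≤ R) (a : Fin N → S) :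
    ∑ m : Fin N → Fin (R + N), alternant d (fun i => m i) * ∏ i, a i ^ (m i : ℕ) =
      (vandermonde a).det * ∏ i, d.eval (a i) := by
  simp only [alternant_eq_sum_perm, det_vandermonde_eq_sum_perm, Finset.sum_mul]
  rw [Finset.sum_comm]
  refine Finset.sum_congr rfl fun σ _ => ?_
  have h := sum_pi_prod fun (i : Fin N) (r : Fin (R + N)) =>
    (X ^ (σ i : ℕ) * d).coeff (r : ℕ) * a i ^ (r : ℕ)
  simp only [sum_fin_coeff_mul_pow (natDegree_X_pow_mul_lt hd _), eval_mul, eval_pow, eval_X,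
    Finset.prod_mul_distrib] at h
  simp only [mul_assoc, ← Finset.mul_sum, h]

variable {d : ℂ[X]} {a t : Fin N → ℂ} {ρ : Fin N → Fin N → ℂ}

lemma sum_weight_mul_prod_coeff (hd : d.natDegree ≤ R) (c : ℂ)
    (h1 : ∀ i, (euler d).eval (a i) = d.eval (a i) * t i)
    (h2 : ∀ i, (euler (euler d)).eval (a i) = d.eval (a i) * (t i ^ 2 + t i - ρ i i))
    (σ : Equiv.Perm (Fin N)) :
    ∑ m : Fin N → Fin (R + N), (∑ i, ((m i : ℂ) ^ 2 - c * (m i : ℂ))) *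
        ∏ i, ((X ^ (σ i : ℕ) * d).coeff (m i) * a i ^ (m i : ℕ)) =
      (∏ i, a i ^ (σ i : ℕ)) * (∏ i, d.eval (a i)) * (∑ i : Fin N, ((i : ℂ) ^ 2 - c * i) +
        2 * ∑ i, (σ i : ℂ) * t i + ∑ i, (t i ^ 2 - ρ i i + (1 - c) * t i)) := by
  have hF (i : Fin N) := sum_fin_coeff_mul_pow (natDegree_X_pow_mul_lt hd (σ i)) (a i)
  have hs (i : Fin N) : ∑ r : Fin (R + N), ((r : ℂ) ^ 2 - c * r) *
      ((X ^ (σ i : ℕ) * d).coeff r * a i ^ (r : ℕ)) = (X ^ (σ i : ℕ) * d).eval (a i) *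
        ((σ i : ℂ) ^ 2 - c * σ i + 2 * (σ i * t i) + (t i ^ 2 - ρ i i + (1 - c) * t i)) := by
    rw [sum_fin_weight_mul_coeff_mul_pow (natDegree_X_pow_mul_lt hd (σ i))]
    simp only [euler_X_pow_mul, map_add, map_nsmul, eval_mul, eval_add, eval_pow, eval_X,
      eval_smul, h1, h2]
    simp only [nsmul_eq_mul]
    ring
  have h := sum_pi_weight_mul_prod _ (fun r : Fin (R + N) => (r : ℂ) ^ 2 - c * r) hF hs
  simp only [eval_mul, eval_pow, eval_X] at h
  rw [h, Finset.prod_mul_distrib, Finset.sum_add_distrib, Finset.sum_add_distrib, ← Finset.mul_sum,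
    Equiv.sum_comp σ fun i : Fin N => ((i : ℂ) ^ 2 - c * i)]

lemma two_mul_sum_Ioi_eq (t : Fin N → ℂ) (hρ : ∀ i j, ρ i j = ρ j i) :
    2 * ∑ i, ∑ j ∈ Finset.Ioi i, (t i + t j - ρ i j) =
      (2 * N - 2) * ∑ i, t i + ∑ i, ρ i i - ∑ i, ∑ j, ρ i j := by
  have hoff := Finset.sum_sum_Ioi_add_eq_sum_sum_off_diag fun i j => t i + t j - ρ i j
  have hcompl (i : Fin N) : ∑ j ∈ ({i} : Finset (Fin N))ᶜ, (t j + t i - ρ j i) =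
      ∑ j, (t j + t i - ρ j i) - (2 * t i - ρ i i) := by
    rw [← Finset.sum_compl_add_sum {i}, Finset.sum_singleton]
    ring
  have hsymm (i j : Fin N) : t j + t i - ρ j i + (t i + t j - ρ i j) =
      2 * (t i + t j - ρ i j) := by
    rw [hρ j i]
    ring
  simp only [hsymm, hcompl, ← Finset.mul_sum] at hoff
  rw [hoff]
  simp only [Finset.sum_sub_distrib, Finset.sum_add_distrib, Finset.sum_const, Finset.card_univ,
    Fintype.card_fin, nsmul_eq_mul, ← Finset.mul_sum]
  rw [Finset.sum_comm (f := fun i j => ρ j i)]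
  ring

lemma sum_weight_mul_alternant (hd : d.natDegree ≤ R) (c : ℂ)
    (h1 : ∀ i, (euler d).eval (a i) = d.eval (a i) * t i)
    (h2 : ∀ i, (euler (euler d)).eval (a i) = d.eval (a i) * (t i ^ 2 + t i - ρ i i))
    (h3 : ∀ i j, (a j - a i) * ρ i j = a j * t i - a i * t j) (hρ : ∀ i j, ρ i j = ρ j i) :
    ∑ m : Fin N → Fin (R + N), (∑ i, ((m i : ℂ) ^ 2 - c * (m i : ℂ))) *
        (alternant d (fun i => m i) * ∏ i, a i ^ (m i : ℕ)) =
      (vandermonde a).det * (∏ i, d.eval (a i)) * (∑ i : Fin N, ((i : ℂ) ^ 2 - c * i) +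
        ∑ i, (t i ^ 2 + (2 * N - 1 - c) * t i) - ∑ i, ∑ j, ρ i j) := by
  have hlog := sum_perm_mul_sum_eq_det_vandermonde_mul (a := a) (t := t)
    (q := fun i j => t i + t j - ρ i j) fun i j => by linear_combination h3 i j
  calc _ = ∑ σ : Equiv.Perm (Fin N), ((Equiv.Perm.sign σ : ℤ) : ℂ) *
        ∑ m : Fin N → Fin (R + N), (∑ i, ((m i : ℂ) ^ 2 - c * (m i : ℂ))) *
          ∏ i, ((X ^ (σ i : ℕ) * d).coeff (m i) * a i ^ (m i : ℕ)) := by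
        simp only [alternant_eq_sum_perm, Finset.prod_mul_distrib, Finset.mul_sum (s :=
          (Finset.univ : Finset (Fin N → Fin (R + N)))), Finset.sum_mul (s :=
          (Finset.univ : Finset (Equiv.Perm (Fin N)))), Finset.mul_sum (s :=
          (Finset.univ : Finset (Equiv.Perm (Fin N))))]
        rw [Finset.sum_comm]
        refine Finset.sum_congr rfl fun σ _ => Finset.sum_congr rfl fun m _ => ?_
        ring
    _ = (∏ i, d.eval (a i)) * (∑ i : Fin N, ((i : ℂ) ^ 2 - c * i) +
          ∑ i, (t i ^ 2 - ρ i i + (1 - c) * t i)) * (vandermonde a).det +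
        2 * (∏ i, d.eval (a i)) * ∑ σ : Equiv.Perm (Fin N), ((Equiv.Perm.sign σ : ℤ) : ℂ) *
          ((∏ i, a i ^ (σ i : ℕ)) * ∑ i, (σ i : ℂ) * t i) := by
        rw [det_vandermonde_eq_sum_perm, Finset.mul_sum, Finset.mul_sum, ← Finset.sum_add_distrib]
        refine Finset.sum_congr rfl fun σ _ => ?_
        rw [sum_weight_mul_prod_coeff hd c h1 h2]
        ring
    _ = _ := by
        have hpair := two_mul_sum_Ioi_eq t hρ
        rw [hlog]
        simp only [Finset.sum_sub_distrib, Finset.sum_add_distrib, ← Finset.mul_sum] at hpair ⊢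
        linear_combination (vandermonde a).det * (∏ i, d.eval (a i)) * hpair

end Alternant

section Coefficients

open Matrix

lemma eq_zero_of_forall_sum_mul_prod_pow {N n : ℕ} (q : (Fin N → Fin n) → ℂ)
    (h : ∀ a : Fin N → ℂ, Function.Injective a → (∀ i, ‖a i‖ < 1) →
      ∑ m, q m * ∏ i, a i ^ (m i : ℕ) = 0) : q = 0 := by
  let s (i : Fin N) : Set ℂ := norm ⁻¹' Set.Ioo ((i : ℝ) / N) (((i : ℝ) + 1) / N)
  have hN (i : Fin N) : (0 : ℝ) < N := mod_cast i.pos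
  have hinf (i : Fin N) : (s i).Infinite := by
    refine ((Set.Ioo_infinite (a := (i : ℝ) / N) (b := ((i : ℝ) + 1) / N) ?_).image
      Complex.ofReal_injective.injOn).mono ?_
    · exact (div_lt_div_iff_of_pos_right (hN i)).mpr (lt_add_one _)
    · rintro _ ⟨u, hu, rfl⟩
      have hu0 : 0 ≤ u := le_trans (by positivity) hu.1.le
      simpa [s, abs_of_nonneg hu0] using hu
  have hdisj {a : Fin N → ℂ} (ha : ∀ i, a i ∈ s i) : Function.Injective a := by
    refine Function.Injective.of_comp (f := norm) (StrictMono.injective fun i j hij => ?_)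
    refine (ha i).2.trans_le (le_trans ?_ (ha j).1.le)
    exact div_le_div_of_nonneg_right (mod_cast hij) (hN i).le
  have hpoly : ∑ m : Fin N → Fin n,
      MvPolynomial.monomial (Finsupp.equivFunOnFinite.symm fun i => (m i : ℕ)) (q m) = 0 := by
    refine MvPolynomial.funext_set s hinf fun a ha => ?_
    have ha' (i : Fin N) : a i ∈ s i := ha i (Set.mem_univ i)
    simp only [map_sum, MvPolynomial.eval_monomial, Finsupp.prod_fintype _ _ fun _ => pow_zero _,
      map_zero]
    refine h a (hdisj ha') fun i => (ha' i).2.trans_le ?_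
    rw [div_le_one (hN i)]
    exact_mod_cast i.isLt
  ext m
  have hcoeff := congrArg (MvPolynomial.coeff
    (Finsupp.equivFunOnFinite.symm fun i => (m i : ℕ))) hpoly
  have hexp (m' : Fin N → Fin n) : (Finsupp.equivFunOnFinite.symm fun i => (m' i : ℕ)) =
      (Finsupp.equivFunOnFinite.symm fun i => (m i : ℕ)) ↔ m' = m := by
    simp only [EmbeddingLike.apply_eq_iff_eq, funext_iff, Fin.val_inj]
  simpa [MvPolynomial.coeff_sum, MvPolynomial.coeff_monomial, hexp] using hcoeff

variable {n : Type*} [Fintype n] [DecidableEq n]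

lemma natDegree_revCharpoly_le (A : Matrix n n ℂ) :
    (revCharpoly A).natDegree ≤ Fintype.card n := by
  have := natDegree_det_X_add_C_le A 1
  rwa [Matrix.map_one _ C.map_zero C.map_one, add_comm] at this

lemma coeff_revCharpoly_zero (A : Matrix n n ℂ) : (revCharpoly A).coeff 0 = 1 := by
  have := coeff_det_X_add_C_zero A 1
  rwa [Matrix.map_one _ C.map_zero C.map_one, add_comm, det_one] at this

lemma coeff_revCharpoly_card (A : Matrix n n ℂ) :
    (revCharpoly A).coeff (Fintype.card n) = A.det := by
  have := coeff_det_X_add_C_card A 1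
  rwa [Matrix.map_one _ C.map_zero C.map_one, add_comm] at this

lemma continuous_coeff_prod {T ι : Type*} [TopologicalSpace T] (s : Finset ι) {f : ι → T → ℂ[X]}
    (hf : ∀ i j, Continuous fun x => (f i x).coeff j) (j : ℕ) :
    Continuous fun x => (∏ i ∈ s, f i x).coeff j := by
  classical
  induction s using Finset.induction_on generalizing j with
  | empty => simpa using continuous_const
  | insert i s hi ih =>
    simp only [Finset.prod_insert hi, coeff_mul]
    exact continuous_finsetSum _ fun p _ => (hf i p.1).mul (ih p.2)

lemma continuous_coeff_revCharpoly (j : ℕ) :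
    Continuous fun A : Matrix n n ℂ => (revCharpoly A).coeff j := by
  simp only [revCharpoly, Matrix.det_apply', finsetSum_coeff, ← map_intCast (C : ℂ →+* ℂ[X]),
    coeff_C_mul]
  refine continuous_finsetSum _ fun σ _ => continuous_const.mul
    (continuous_coeff_prod _ (fun i l => ?_) j)
  simp only [Matrix.add_apply, Matrix.smul_apply, Matrix.map_apply, coeff_add, smul_eq_mul,
    X_mul_C, coeff_C_mul]
  fun_prop

end Coefficients

section AlternantValues

open Matrix

variable {N k R : ℕ} {S : Type*} [CommRing S]

lemma continuous_alternant_revCharpoly {n : Type*} [Fintype n] [DecidableEq n] (m : Fin N → ℕ) :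
    Continuous fun A : Matrix n n ℂ => alternant (revCharpoly A) m := by
  refine Continuous.matrix_det (continuous_matrix fun j i => ?_)
  simp only [Matrix.of_apply, coeff_X_pow_mul']
  split_ifs
  exacts [continuous_coeff_revCharpoly _, continuous_const]

lemma alternant_comp_perm (d : S[X]) (m : Fin N → ℕ) (σ : Equiv.Perm (Fin N)) :
    alternant d (fun i => m (σ i)) = (Equiv.Perm.sign σ : ℤ) * alternant d m :=
  Matrix.det_permute' σ (Matrix.of fun j i : Fin N => ((X : S[X]) ^ (j : ℕ) * d).coeff (m i))

lemma alternant_of_not_injective (d : S[X]) {m : Fin N → ℕ} (hm : ¬ Function.Injective m) :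
    alternant d m = 0 := by
  obtain ⟨i, j, hij, hne⟩ := Function.not_injective_iff.mp hm
  exact Matrix.det_zero_of_column_eq hne fun l => by simp [hij]

lemma alternant_val (d : S[X]) : alternant d (fun i : Fin k => i) = d.coeff 0 ^ k := by
  rw [alternant, Matrix.det_of_isUpperTriangular]
  · simp [coeff_X_pow_mul']
  · intro i j hij
    have hlt : (j : ℕ) < i := hij
    rw [Matrix.of_apply, coeff_X_pow_mul', if_neg (by omega)]

lemma alternant_add_val {d : S[X]} (hd : d.natDegree ≤ R) :
    alternant d (fun i : Fin k => R + i) = d.coeff R ^ k := by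
  rw [alternant, Matrix.det_of_isLowerTriangular]
  · simp [coeff_X_pow_mul]
  · intro i j hij
    have hlt : (i : ℕ) < j := hij
    rw [Matrix.of_apply, coeff_X_pow_mul', if_pos (by omega)]
    exact coeff_eq_zero_of_natDegree_lt (by omega)

/-- The exponents `0, …, k - 1, R + k, …, R + 2 * k - 1`. -/
def extremalExponent (k R : ℕ) (i : Fin (k + k)) : Fin (R + (k + k)) :=
  ⟨if (i : ℕ) < k then i else R + i, by split_ifs <;> omega⟩

lemma extremalExponent_castAdd (i : Fin k) :
    (extremalExponent k R (Fin.castAdd k i) : ℕ) = i := by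
  simp [extremalExponent]

lemma extremalExponent_natAdd (i : Fin k) :
    (extremalExponent k R (Fin.natAdd k i) : ℕ) = R + (k + i) := by
  simp [extremalExponent, add_comm]

lemma extremalExponent_injective (k R : ℕ) : Function.Injective (extremalExponent k R) := by
  intro i j h
  simp only [extremalExponent, Fin.mk.injEq] at h
  ext
  split_ifs at h <;> omega

lemma mem_range_extremalExponent {x : Fin (R + (k + k))} :
    x ∈ Set.range (extremalExponent k R) ↔ (x : ℕ) < k ∨ R + k ≤ x := by
  constructor
  · rintro ⟨i, rfl⟩
    simp only [extremalExponent]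
    split_ifs <;> omega
  · rintro (hx | hx)
    · exact ⟨⟨x, by omega⟩, by simp [extremalExponent, hx]⟩
    · exact ⟨⟨x - R, by omega⟩, Fin.ext (by simp only [extremalExponent]; split_ifs <;> omega)⟩

lemma alternant_extremalExponent {d : S[X]} (hd : d.natDegree ≤ R) :
    alternant d (fun i => extremalExponent k R i) = d.coeff 0 ^ k * d.coeff R ^ k := by
  have hblocks : Matrix.submatrix (Matrix.of fun j i : Fin (k + k) =>
      (X ^ (j : ℕ) * d).coeff (extremalExponent k R i)) finSumFinEquiv finSumFinEquiv =
      Matrix.fromBlocks (Matrix.of fun j i : Fin k => (X ^ (j : ℕ) * d).coeff i) 0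
        (Matrix.of fun j i : Fin k => (X ^ (k + j : ℕ) * d).coeff i)
        (Matrix.of fun j i : Fin k => (X ^ (j : ℕ) * d).coeff (R + i)) := by
    ext (j | j) (i | i) <;>
      simp only [Matrix.submatrix_apply, Matrix.of_apply, finSumFinEquiv_apply_left,
        finSumFinEquiv_apply_right, Fin.val_castAdd, Fin.val_natAdd, extremalExponent_castAdd,
        extremalExponent_natAdd, Matrix.fromBlocks_apply₁₁, Matrix.fromBlocks_apply₁₂,
        Matrix.fromBlocks_apply₂₁, Matrix.fromBlocks_apply₂₂, Matrix.zero_apply]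
    · rw [coeff_X_pow_mul', if_pos (by omega)]
      exact coeff_eq_zero_of_natDegree_lt (by omega)
    · rw [pow_add, mul_assoc, show R + (k + (i : ℕ)) = R + i + k by ring, coeff_X_pow_mul]
  rw [alternant, ← Matrix.det_submatrix_equiv_self finSumFinEquiv, hblocks,
    Matrix.det_fromBlocks_zero₁₂, ← alternant_val, ← alternant_add_val hd]
  rfl

end AlternantValues

section Extremality

lemma subset_of_sum_eq_sum_of_nonpos_of_pos {α M : Type*} [AddCommGroup M] [LinearOrder M]
    [IsOrderedAddMonoid M] {s t : Finset α} {f : α → M}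
    (hsum : ∑ x ∈ s, f x = ∑ x ∈ t, f x) (ht : ∀ x ∈ t, f x ≤ 0) (hpos : ∀ x ∉ t, 0 < f x) :
    s ⊆ t := by
  classical
  by_contra hst
  have hout : 0 < ∑ x ∈ s \ t, f x :=
    Finset.sum_pos (fun x hx => hpos x (Finset.mem_sdiff.mp hx).2) (Finset.sdiff_nonempty.mpr hst)
  have hin : ∑ x ∈ t \ s, f x ≤ 0 :=
    Finset.sum_nonpos fun x hx => ht x (Finset.mem_sdiff.mp hx).1
  have hdiff := Finset.sum_sdiff_sub_sum_sdiff (s₁ := s) (s₂ := t) (f := f)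
  rw [hsum, sub_self, sub_eq_zero] at hdiff
  exact (hdiff ▸ hout).not_ge hin

variable {k R : ℕ}

/-- The quadratic weight of an exponent vector that the Casimir relation prescribes on the support
of the averaged alternants. -/
def casimirWeight (k R : ℕ) (m : Fin (k + k) → ℕ) : ℤ :=
  ∑ i, ((m i : ℤ) ^ 2 - (R + 2 * k - 1) * m i)

lemma exists_perm_of_casimirWeight_eq {m : Fin (k + k) → Fin (R + (k + k))}
    (hm : Function.Injective m) (hw : casimirWeight k R (fun i => m i) =
      casimirWeight k R fun i => extremalExponent k R i) :
    ∃ σ : Equiv.Perm (Fin (k + k)), m = extremalExponent k R ∘ σ := by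
  -- Up to an additive constant, the weight of `x` is `-f x`.
  let f (x : Fin (R + (k + k))) : ℤ := ((x : ℕ) - k + 1) * (R + k - (x : ℕ))
  have hsum : ∑ x ∈ Finset.univ.image m, f x =
      ∑ x ∈ Finset.univ.image (extremalExponent k R), f x := by
    rw [Finset.sum_image hm.injOn, Finset.sum_image (extremalExponent_injective k R).injOn]
    have hf (e : Fin (k + k) → Fin (R + (k + k))) : ∑ i, f (e i) =
        (k + k) * ((1 - k) * (R + k)) - casimirWeight k R fun i => e i := by
      rw [casimirWeight, eq_sub_iff_add_eq, ← Finset.sum_add_distrib]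
      simp only [f]
      rw [Finset.sum_congr rfl fun i _ => (by ring : _ = (1 - (k : ℤ)) * (R + k))]
      simp
    rw [hf, hf, hw]
  have hsub := subset_of_sum_eq_sum_of_nonpos_of_pos hsum
    (fun x hx => by
      have hx' : x ∈ Set.range (extremalExponent k R) := by simpa using hx
      rcases mem_range_extremalExponent.mp hx' with h | h
      · exact mul_nonpos_of_nonpos_of_nonneg (by omega) (by omega)
      · exact mul_nonpos_of_nonneg_of_nonpos (by omega) (by omega))
    (fun x hx => by
      have hx' : x ∉ Set.range (extremalExponent k R) := by simpa using hx
      rw [mem_range_extremalExponent] at hx'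
      exact mul_pos (by omega) (by omega))
  have hch (i : Fin (k + k)) : ∃ j, extremalExponent k R j = m i := by
    simpa using hsub (Finset.mem_image_of_mem m (Finset.mem_univ i))
  choose σ hσ using hch
  have hinj : Function.Injective σ := fun i j hij => hm (by rw [← hσ i, ← hσ j, hij])
  exact ⟨Equiv.ofBijective σ (Finite.injective_iff_bijective.mp hinj), funext fun i => (hσ i).symm⟩

end Extremality

section AveragedAlternant

open Matrix

variable {k R : ℕ}

lemma sum_casimirWeight_mul_alternant {A : Matrix (Fin R) (Fin R) ℂ} {a : Fin (k + k) → ℂ}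
    (ha : ∀ i, IsUnit (1 + a i • A).det) :
    ∑ m : Fin (k + k) → Fin (R + (k + k)), ((casimirWeight k R (fun i => m i) : ℂ) -
        (casimirWeight k R (fun i => i) + k ^ 2 * R)) *
        (alternant (revCharpoly A) (fun i => m i) * ∏ i, a i ^ (m i : ℕ)) =
      -((vandermonde a).det * (∏ i, (1 + a i • A).det) *
        ((logGradient k a A * logGradient k a A).trace +
          ∑ i, (1 - logResolvent (a i) A).trace * (logResolvent (a i) A).trace)) := by
  have hd : (revCharpoly A).natDegree ≤ R := by
    simpa using natDegree_revCharpoly_le A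
  have hweight := sum_weight_mul_alternant hd (R + 2 * k - 1)
    (ρ := fun i j => (logResolvent (a i) A * logResolvent (a j) A).trace)
    (fun i => eval_euler_revCharpoly (ha i)) (fun i => eval_euler_euler_revCharpoly (ha i))
    (fun i j => sub_mul_trace_logResolvent_mul (ha i) (ha j))
    (fun i j => Matrix.trace_mul_comm _ _)
  simp only [sub_mul, Finset.sum_sub_distrib, ← Finset.mul_sum, sum_alternant hd, casimirWeight,
    Int.cast_sum, Int.cast_sub, Int.cast_pow, Int.cast_mul, Int.cast_add, Int.cast_natCast,
    Int.cast_ofNat, Int.cast_one] at hweight ⊢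
  rw [hweight, trace_logGradient_mul_self]
  simp only [← eval_revCharpoly, Matrix.trace_sub, Matrix.trace_one, Fintype.card_fin, sub_mul,
    Finset.sum_add_distrib, Finset.sum_sub_distrib, ← Finset.mul_sum, ← pow_two]
  push_cast
  ring

lemma continuous_inv_det_pow (k : ℕ) :
    Continuous fun θ : unitaryGroup (Fin R) ℂ => θ.1.det⁻¹ ^ k :=
  (continuous_subtype_val.matrix_det.inv₀ fun θ => (isUnit_det_unitaryGroup θ).ne_zero).pow k

variable (μ : Measure (unitaryGroup (Fin R) ℂ))

/-- The coefficient of `∏ᵢ aᵢ^{mᵢ}` in the product of the Vandermonde determinant of `a` with the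
average of `charProduct k a`. -/
noncomputable def averagedAlternant (k : ℕ) (m : Fin (k + k) → ℕ) : ℂ :=
  ∫ θ, θ.1.det⁻¹ ^ k * alternant (revCharpoly θ.1) m ∂μ

lemma averagedAlternant_comp_perm (k : ℕ) (m : Fin (k + k) → ℕ) (σ : Equiv.Perm (Fin (k + k))) :
    averagedAlternant μ k (fun i => m (σ i)) =
      (Equiv.Perm.sign σ : ℤ) * averagedAlternant μ k m := by
  simp only [averagedAlternant, alternant_comp_perm, mul_left_comm _ ((Equiv.Perm.sign σ : ℤ) : ℂ),
    integral_const_mul]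

variable [IsProbabilityMeasure μ]

lemma sum_mul_averagedAlternant (k : ℕ) (w : (Fin (k + k) → Fin (R + (k + k))) → ℂ) :
    ∑ m, w m * averagedAlternant μ k (fun i => m i) =
      ∫ θ, θ.1.det⁻¹ ^ k * ∑ m : Fin (k + k) → Fin (R + (k + k)),
        w m * alternant (revCharpoly θ.1) (fun i => m i) ∂μ := by
  simp only [averagedAlternant, ← integral_const_mul]
  rw [← integral_finsetSum]
  · simp only [Finset.mul_sum, mul_left_comm]
  · exact fun m _ => integrable_of_continuous_of_compactSpace (continuous_const.mul
      ((continuous_inv_det_pow k).mul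
        ((continuous_alternant_revCharpoly _).comp continuous_subtype_val)))

lemma averagedAlternant_extremalExponent (k : ℕ) :
    averagedAlternant μ k (fun i => extremalExponent k R i) = 1 := by
  have h (θ : unitaryGroup (Fin R) ℂ) : θ.1.det⁻¹ ^ k *
      alternant (revCharpoly θ.1) (fun i => extremalExponent k R i) = 1 := by
    have hd : (revCharpoly θ.1).natDegree ≤ R := by
      simpa using natDegree_revCharpoly_le θ.1
    have hR : (revCharpoly θ.1).coeff R = θ.1.det := by
      simpa using coeff_revCharpoly_card θ.1
    rw [alternant_extremalExponent hd, coeff_revCharpoly_zero, hR, one_pow, one_mul, ← mul_pow,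
      inv_mul_cancel₀ (isUnit_det_unitaryGroup θ).ne_zero, one_pow]
  simp only [averagedAlternant, h]
  simp

variable [μ.IsHaarMeasure]

lemma casimirWeight_eq_of_averagedAlternant_ne_zero {m : Fin (k + k) → Fin (R + (k + k))}
    (hm : averagedAlternant μ k (fun i => m i) ≠ 0) :
    (casimirWeight k R (fun i => m i) : ℂ) = casimirWeight k R (fun i => i) + k ^ 2 * R := by
  have hzero := eq_zero_of_forall_sum_mul_prod_pow
    (fun m : Fin (k + k) → Fin (R + (k + k)) => ((casimirWeight k R (fun i => m i) : ℂ) -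
      (casimirWeight k R (fun i => i) + k ^ 2 * R)) * averagedAlternant μ k (fun i => m i))
    fun a _ ha => by
      have hcasimir := congrArg (-(vandermonde a).det * ·) (integral_casimir_charProduct μ k ha)
      simp only [mul_zero, ← integral_const_mul] at hcasimir
      rw [← hcasimir]
      simp only [mul_right_comm _ (averagedAlternant _ _ _)]
      rw [sum_mul_averagedAlternant]
      congr 1
      ext θ
      simp only [mul_right_comm _ _ (alternant _ _), mul_assoc _ (alternant _ _)]
      rw [sum_casimirWeight_mul_alternant fun i => isUnit_det_one_add_smul (ha i) θ, charProduct]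
      ring
  exact sub_eq_zero.mp ((mul_eq_zero.mp (congrFun hzero m)).resolve_right hm)

lemma exists_perm_of_averagedAlternant_ne_zero {m : Fin (k + k) → Fin (R + (k + k))}
    (hm : averagedAlternant μ k (fun i => m i) ≠ 0) :
    ∃ σ : Equiv.Perm (Fin (k + k)), m = extremalExponent k R ∘ σ := by
  refine exists_perm_of_casimirWeight_eq ?_ ?_
  · by_contra hinj
    have hinj' : ¬ Function.Injective fun i => (m i : ℕ) := fun h =>
      hinj fun i j hij => h (congrArg _ hij)
    simp [averagedAlternant, alternant_of_not_injective _ hinj'] at hm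
  · have hext := casimirWeight_eq_of_averagedAlternant_ne_zero μ (m := extremalExponent k R)
      (by simp [averagedAlternant_extremalExponent])
    exact_mod_cast (casimirWeight_eq_of_averagedAlternant_ne_zero μ hm).trans hext.symm

lemma det_vandermonde_mul_integral_charProduct (a : Fin (k + k) → ℂ) :
    (vandermonde a).det * ∫ θ, charProduct k a θ.1 ∂μ =
      (Matrix.of fun i j : Fin (k + k) => a i ^ (extremalExponent k R j : ℕ)).det := by
  classical
  calc _ = ∑ m : Fin (k + k) → Fin (R + (k + k)), (∏ i, a i ^ (m i : ℕ)) *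
        averagedAlternant μ k (fun i => m i) := by
        rw [sum_mul_averagedAlternant, ← integral_const_mul]
        congr 1
        ext θ
        simp only [mul_comm (Finset.prod _ _) (alternant _ _)]
        rw [sum_alternant (by simpa using natDegree_revCharpoly_le θ.1)]
        simp only [charProduct, eval_revCharpoly]
        ring
    _ = ∑ m ∈ Finset.univ.image (fun σ : Equiv.Perm (Fin (k + k)) => extremalExponent k R ∘ σ),
        (∏ i, a i ^ (m i : ℕ)) * averagedAlternant μ k (fun i => m i) := by
        refine (Finset.sum_subset (Finset.subset_univ _) fun m _ hm => ?_).symm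
        by_contra hne
        obtain ⟨σ, hσ⟩ := exists_perm_of_averagedAlternant_ne_zero μ (right_ne_zero_of_mul hne)
        exact hm (Finset.mem_image.mpr ⟨σ, Finset.mem_univ _, hσ.symm⟩)
    _ = ∑ σ : Equiv.Perm (Fin (k + k)), ((Equiv.Perm.sign σ : ℤ) : ℂ) *
        ∏ i, a i ^ (extremalExponent k R (σ i) : ℕ) := by
        rw [Finset.sum_image]
        · refine Finset.sum_congr rfl fun σ _ => ?_
          simp only [Function.comp_apply]
          rw [averagedAlternant_comp_perm μ k (fun i => (extremalExponent k R i : ℕ)),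
            averagedAlternant_extremalExponent, mul_one, mul_comm]
        · exact fun σ _ τ _ h =>
            Equiv.ext fun i => extremalExponent_injective k R (congrFun h i)
    _ = _ := by
        rw [← Matrix.det_transpose, Matrix.det_apply']
        rfl

end AveragedAlternant

section CauchyBinet

open Matrix

variable {ι κ S : Type*} [Fintype ι] [DecidableEq ι] [Fintype κ] [CommRing S]

lemma det_mul_eq_sum_prod_mul_det (A : Matrix ι κ S) (B : Matrix κ ι S) :
    (A * B).det = ∑ m : ι → κ, (∏ i, A i (m i)) * (B.submatrix m id).det := by
  classical
  have hrow : A * B = fun i => ∑ r, A i r • B r := by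
    ext i j
    simp [Matrix.mul_apply]
  rw [hrow]
  exact (Matrix.detRowAlternating.toMultilinearMap.map_sum fun i r => A i r • B r).trans
    (Finset.sum_congr rfl fun m _ => MultilinearMap.map_smul_univ _ _ _)

lemma det_mul_eq_sum_det_mul_prod (A : Matrix ι κ S) (B : Matrix κ ι S) :
    (A * B).det = ∑ m : ι → κ, (A.submatrix id m).det * ∏ i, B (m i) i := by
  rw [← Matrix.det_transpose, Matrix.transpose_mul, det_mul_eq_sum_prod_mul_det]
  simp only [Matrix.transpose_apply, ← Matrix.transpose_submatrix, Matrix.det_transpose, mul_comm]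

lemma factorial_mul_det_mul (A : Matrix ι κ S) (B : Matrix κ ι S) :
    ((Fintype.card ι).factorial : S) * (A * B).det =
      ∑ m : ι → κ, (A.submatrix id m).det * (B.submatrix m id).det := by
  have hperm (σ : Equiv.Perm ι) : (A * B).det = ∑ m : ι → κ,
      ((Equiv.Perm.sign σ : ℤ) : S) * (∏ i, A i (m (σ i))) * (B.submatrix m id).det := by
    rw [det_mul_eq_sum_prod_mul_det, ← (Equiv.arrowCongr σ.symm (Equiv.refl κ)).sum_comp]
    refine Finset.sum_congr rfl fun m _ => ?_
    have hsign : (B.submatrix (m ∘ σ) id).det =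
        (Equiv.Perm.sign σ : ℤ) * (B.submatrix m id).det :=
      Matrix.det_permute σ (B.submatrix m id)
    change (∏ i, A i (m (σ i))) * (B.submatrix (m ∘ σ) id).det = _
    rw [hsign]
    ring
  calc ((Fintype.card ι).factorial : S) * (A * B).det = ∑ _σ : Equiv.Perm ι, (A * B).det := by
        simp [Fintype.card_perm]
    _ = _ := by
        rw [Finset.sum_congr rfl fun σ _ => hperm σ, Finset.sum_comm]
        refine Finset.sum_congr rfl fun m _ => ?_
        rw [← Finset.sum_mul, ← Matrix.det_transpose (A.submatrix id m),
          Matrix.det_apply' (A.submatrix id m)ᵀ]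
        rfl

end CauchyBinet

section Wronskian

open Matrix

variable {S : Type*} [CommRing S]

lemma euler_pow_X_pow_mul (l j : ℕ) (p : S[X]) :
    (euler ^ l) (X ^ j * p) =
      X ^ j * (((j : Module.End S S[X]) + euler) ^ l : Module.End S S[X]) p := by
  induction l with
  | zero => rfl
  | succ l ih =>
    rw [pow_succ', Module.End.mul_apply, ih, euler_X_pow_mul, pow_succ', Module.End.mul_apply,
      LinearMap.add_apply, add_comm]
    simp

lemma natCast_add_euler_pow_apply (l j : ℕ) (p : S[X]) :
    (((j : Module.End S S[X]) + euler) ^ l : Module.End S S[X]) p =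
      ∑ e ∈ Finset.range (l + 1), (j : S[X]) ^ e * (l.choose e * (euler ^ (l - e)) p) := by
  rw [(Nat.cast_commute j euler).add_pow, LinearMap.sum_apply]
  refine Finset.sum_congr rfl fun e _ => ?_
  rw [← Nat.cast_pow, Module.End.mul_apply, Module.End.mul_apply, Module.End.natCast_apply,
    Module.End.natCast_apply, map_nsmul, nsmul_eq_mul, nsmul_eq_mul, Nat.cast_pow]

lemma coeff_euler_pow (p : S[X]) (l r : ℕ) : ((euler ^ l) p).coeff r = r ^ l * p.coeff r := by
  induction l with
  | zero => simp
  | succ l ih => rw [pow_succ', Module.End.mul_apply, coeff_euler, ih, pow_succ', mul_assoc]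

lemma natDegree_euler_pow_le (p : S[X]) (l : ℕ) : ((euler ^ l) p).natDegree ≤ p.natDegree :=
  natDegree_le_iff_coeff_eq_zero.mpr fun r hr => by
    rw [coeff_euler_pow, coeff_eq_zero_of_natDegree_lt hr, mul_zero]

lemma det_euler_pow_X_pow_mul (k : ℕ) (d : S[X]) :
    (Matrix.of fun j l : Fin k => (euler ^ (l : ℕ)) (X ^ (j : ℕ) * d)).det =
      X ^ (∑ i : Fin k, (i : ℕ)) *
        ((vandermonde fun i : Fin k => ((i : ℕ) : S[X])).det * d ^ k) := by
  set U : Matrix (Fin k) (Fin k) S[X] :=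
    Matrix.of fun e l => (l : ℕ).choose e * (euler ^ (l - e : ℕ)) d
  have hU : U.det = d ^ k := by
    rw [Matrix.det_of_isUpperTriangular]
    · simp [U]
    · intro i j hij
      simp [U, Nat.choose_eq_zero_of_lt (show (j : ℕ) < i from hij)]
  rw [← hU, ← Matrix.det_mul, ← Finset.prod_pow_eq_pow_sum]
  rw [← Matrix.det_mul_column]
  congr 1
  refine Matrix.ext fun j l => ?_
  rw [Matrix.of_apply, Matrix.of_apply, euler_pow_X_pow_mul, natCast_add_euler_pow_apply,
    Matrix.mul_apply]
  simp only [vandermonde_apply, U, Matrix.of_apply]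
  rw [Fin.sum_univ_eq_sum_range fun e : ℕ =>
    (j : S[X]) ^ e * ((l : ℕ).choose e * (euler ^ (l - e : ℕ)) d)]
  congr 1
  have hl : Finset.range (l + 1) ⊆ Finset.range k := Finset.range_subset_range.mpr l.isLt
  refine Finset.sum_subset hl fun e _ he => ?_
  rw [Finset.mem_range, not_lt] at he
  simp [Nat.choose_eq_zero_of_lt he]

lemma of_coeff_mul_of_pow_mul_X_pow {d : S[X]} {k R : ℕ} (hd : d.natDegree ≤ R) :
    (Matrix.of fun (j : Fin k) (r : Fin (R + k)) => C ((X ^ (j : ℕ) * d).coeff r)) *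
      (Matrix.of fun (r : Fin (R + k)) (l : Fin k) => ((r : ℕ) : S[X]) ^ (l : ℕ) * X ^ (r : ℕ)) =
      Matrix.of fun j l : Fin k => (euler ^ (l : ℕ)) (X ^ (j : ℕ) * d) := by
  refine Matrix.ext fun j l => ?_
  rw [Matrix.mul_apply, Matrix.of_apply, as_sum_range' ((euler ^ (l : ℕ)) _) (R + k)
    ((natDegree_euler_pow_le _ _).trans_lt (natDegree_X_pow_mul_lt hd j)),
    ← Fin.sum_univ_eq_sum_range fun r =>
      monomial r (((euler ^ (l : ℕ)) (X ^ (j : ℕ) * d)).coeff r)]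
  refine Finset.sum_congr rfl fun r _ => ?_
  rw [← C_mul_X_pow_eq_monomial, coeff_euler_pow]
  simp only [Matrix.of_apply, C_mul, C_pow, map_natCast]
  ring

lemma det_vandermonde_natCast (S : Type*) [CommRing S] (k : ℕ) :
    (vandermonde fun i : Fin k => ((i : ℕ) : S)).det = ∏ i ∈ Finset.range k, (i.factorial : S) := by
  rcases k with _ | k
  · simp
  · rw [det_vandermonde_id_eq_superFactorial, ← Nat.prod_range_succ_factorial, Nat.cast_prod]

lemma det_submatrix_of_pow_mul_X_pow {k n : ℕ} (m : Fin k → Fin n) :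
    ((Matrix.of fun (r : Fin n) (l : Fin k) => ((r : ℕ) : S[X]) ^ (l : ℕ) * X ^ (r : ℕ)).submatrix
      m id).det = X ^ (∑ i, (m i : ℕ)) * C (vandermonde fun i => ((m i : ℕ) : S)).det := by
  rw [RingHom.map_det, ← Finset.prod_pow_eq_pow_sum, ← Matrix.det_mul_column]
  congr 1
  refine Matrix.ext fun i l => ?_
  simp [vandermonde_apply, mul_comm]

lemma factorial_mul_pow_eq_sum_alternant {d : S[X]} {R : ℕ} (hd : d.natDegree ≤ R) (k : ℕ) :
    ((k.factorial * ∏ i ∈ Finset.range k, i.factorial : ℕ) : S[X]) *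
        (X ^ (∑ i : Fin k, (i : ℕ)) * d ^ k) =
      ∑ m : Fin k → Fin (R + k), C (alternant d (fun i => m i) *
        (vandermonde fun i => ((m i : ℕ) : S)).det) * X ^ ∑ i, (m i : ℕ) := by
  have h := factorial_mul_det_mul
    (Matrix.of fun (j : Fin k) (r : Fin (R + k)) => C ((X ^ (j : ℕ) * d).coeff r))
    (Matrix.of fun (r : Fin (R + k)) (l : Fin k) => ((r : ℕ) : S[X]) ^ (l : ℕ) * X ^ (r : ℕ))
  have halt (m : Fin k → Fin (R + k)) : ((Matrix.of fun (j : Fin k) (r : Fin (R + k)) =>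
      C ((X ^ (j : ℕ) * d).coeff r)).submatrix id m).det = C (alternant d fun i => m i) :=
    (RingHom.map_det C _).symm
  simp only [of_coeff_mul_of_pow_mul_X_pow hd, det_euler_pow_X_pow_mul, det_vandermonde_natCast,
    Fintype.card_fin, halt, det_submatrix_of_pow_mul_X_pow] at h
  refine Eq.trans ?_ (h.trans (Finset.sum_congr rfl fun m _ => ?_))
  · push_cast
    ring
  · rw [C_mul]
    ring

lemma factorial_mul_coeff_pow_eq_sum_alternant {d : S[X]} {R : ℕ} (hd : d.natDegree ≤ R)
    (k n : ℕ) :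
    ((k.factorial * ∏ i ∈ Finset.range k, i.factorial : ℕ) : S) * (d ^ k).coeff n =
      ∑ m : Fin k → Fin (R + k) with ∑ i, (m i : ℕ) = n + ∑ i : Fin k, (i : ℕ),
        alternant d (fun i => m i) * (vandermonde fun i => ((m i : ℕ) : S)).det := by
  have h := congrArg (coeff · (n + ∑ i : Fin k, (i : ℕ))) (factorial_mul_pow_eq_sum_alternant hd k)
  simpa only [coeff_natCast_mul, coeff_C_mul, coeff_X_pow_mul, finsetSum_coeff, coeff_X_pow,
    mul_ite, mul_one, mul_zero, eq_comm, Finset.sum_filter] using h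

end Wronskian

section BlockDeterminant

open Matrix

variable {F : Type*} [Field F] {k : ℕ}

lemma lagrange_basis_mul_vandermonde {b : Fin k → F} (hb : Function.Injective b) (a : Fin k → F) :
    (Matrix.of fun i j => (Lagrange.basis Finset.univ b j).eval (a i)) * vandermonde b =
      vandermonde a := by
  ext i m
  have hdeg : ((X : F[X]) ^ (m : ℕ)).degree < (Finset.univ : Finset (Fin k)).card := by
    simp
  have h := congrArg (eval (a i)) (Lagrange.eq_interpolate (v := b) hb.injOn hdeg)
  simp only [Lagrange.interpolate_apply, eval_finsetSum, eval_mul, eval_C, eval_pow, eval_X] at h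
  simp only [Matrix.mul_apply, vandermonde_apply, h, Matrix.of_apply, mul_comm]

lemma eval_lagrange_basis_mul_sub (b : Fin k → F) (j : Fin k) (x : F) :
    (Lagrange.basis Finset.univ b j).eval x * (x - b j) =
      (Lagrange.nodal Finset.univ b).eval x * Lagrange.nodalWeight Finset.univ b j := by
  rw [Lagrange.basis_eq_prod_sub_inv_mul_nodal_div (Finset.mem_univ j),
    ← Lagrange.nodal_erase_eq_nodal_div (Finset.mem_univ j),
    Lagrange.nodal_eq_mul_nodal_erase (Finset.mem_univ j)]
  simp only [eval_mul, eval_C, eval_sub, eval_X]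
  ring

/-- The matrix whose rows are `(1, x, …, x^(k-1), x^L, …, x^(L+k-1))`, for `x` in `b` and then for
`x` in `a`. -/
def gapVandermonde (L : ℕ) (b a : Fin k → F) : Matrix (Fin k ⊕ Fin k) (Fin k ⊕ Fin k) F :=
  Matrix.fromBlocks (vandermonde b) (diagonal (fun j => b j ^ L) * vandermonde b)
    (vandermonde a) (diagonal (fun i => a i ^ L) * vandermonde a)

/-- The matrix with entries `∑ aᵢ^r bⱼ^s` over `r + s = L - 1`, which are the divided differences
`(aᵢ^L - bⱼ^L) / (aᵢ - bⱼ)`. -/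
def geomKernel (L : ℕ) (b a : Fin k → F) : Matrix (Fin k) (Fin k) F :=
  Matrix.of fun i j => ∑ r : Fin L, a i ^ (r : ℕ) * b j ^ (r.rev : ℕ)

lemma geomKernel_mul_sub (L : ℕ) (b a : Fin k → F) (i j : Fin k) :
    geomKernel L b a i j * (a i - b j) = a i ^ L - b j ^ L := by
  rw [← (Commute.all (a i) (b j)).geom_sum₂_mul, ← Fin.sum_univ_eq_sum_range]
  simp only [geomKernel, Matrix.of_apply, Fin.val_rev, Nat.sub_sub, add_comm 1]

lemma det_gapVandermonde {b : Fin k → F} (hb : Function.Injective b) (a : Fin k → F) (L : ℕ) :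
    (gapVandermonde L b a).det =
      (∏ i, (Lagrange.nodal Finset.univ b).eval (a i)) *
        (∏ j, Lagrange.nodalWeight Finset.univ b j) *
        (vandermonde b).det ^ 2 * (geomKernel L b a).det := by
  set W : Matrix (Fin k) (Fin k) F :=
    Matrix.of fun i j => (Lagrange.basis Finset.univ b j).eval (a i)
  have hfactor : gapVandermonde L b a =
      Matrix.fromBlocks 1 (diagonal fun j => b j ^ L) W (diagonal (fun i => a i ^ L) * W) *
        Matrix.fromBlocks (vandermonde b) 0 0 (vandermonde b) := by
    rw [Matrix.fromBlocks_multiply, gapVandermonde]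
    simp [Matrix.mul_assoc, W, lagrange_basis_mul_vandermonde hb a]
  have hschur : diagonal (fun i => a i ^ L) * W - W * diagonal (fun j => b j ^ L) =
      Matrix.of fun i j => (Lagrange.nodal Finset.univ b).eval (a i) *
        (Matrix.of fun i j => Lagrange.nodalWeight Finset.univ b j * geomKernel L b a i j) i j := by
    ext i j
    simp only [Matrix.sub_apply, Matrix.diagonal_mul, Matrix.mul_diagonal, W, Matrix.of_apply]
    linear_combination -(Lagrange.basis Finset.univ b j).eval (a i) * geomKernel_mul_sub L b a i j +
      geomKernel L b a i j * eval_lagrange_basis_mul_sub b j (a i)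
  rw [hfactor, Matrix.det_mul, Matrix.det_fromBlocks_one₁₁, hschur, Matrix.det_mul_column,
    Matrix.det_mul_row, Matrix.det_fromBlocks_zero₂₁]
  ring

lemma det_geomKernel_self (b a : Fin k → F) :
    (geomKernel k b a).det =
      (Equiv.Perm.sign (Fin.revPerm : Equiv.Perm (Fin k)) : ℤ) *
        ((vandermonde a).det * (vandermonde b).det) := by
  have h : geomKernel k b a = vandermonde a * (vandermonde b)ᵀ.submatrix Fin.revPerm id := by
    ext i j
    simp [geomKernel, Matrix.mul_apply]
  rw [h, Matrix.det_mul, Matrix.det_permute, Matrix.det_transpose]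
  ring

lemma det_gapVandermonde_mul {b : Fin k → F} (hb : Function.Injective b) (a : Fin k → F) (L : ℕ) :
    (gapVandermonde L b a).det * (geomKernel k b a).det =
      (gapVandermonde k b a).det * (geomKernel L b a).det := by
  rw [det_gapVandermonde hb, det_gapVandermonde hb]
  ring

lemma det_of_pow_extremalExponent (R : ℕ) (b a : Fin k → F) :
    (Matrix.of fun i j : Fin (k + k) =>
      Fin.append b a i ^ (extremalExponent k R j : ℕ)).det = (gapVandermonde (R + k) b a).det := by
  rw [← Matrix.det_submatrix_equiv_self finSumFinEquiv]
  congr 1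
  ext (i | i) (j | j) <;>
    simp [-Fin.natAdd_eq_addNat, extremalExponent_castAdd, extremalExponent_natAdd,
      gapVandermonde, ← pow_add, add_assoc]

lemma det_vandermonde_append (b a : Fin k → F) :
    (vandermonde (Fin.append b a)).det = (gapVandermonde k b a).det := by
  rw [← Matrix.det_submatrix_equiv_self finSumFinEquiv]
  congr 1
  ext (i | i) (j | j) <;>
    simp [-Fin.natAdd_eq_addNat, gapVandermonde, vandermonde_apply, ← pow_add]

lemma det_geomKernel_eq_sum (L : ℕ) (b a : Fin k → F) :
    (geomKernel L b a).det = ∑ p : Fin k → Fin L, ∑ q : Fin k → Fin L,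
      ((1 : Matrix (Fin L) (Fin L) F).submatrix p fun i => (q i).rev).det *
        ((∏ i, a i ^ (p i : ℕ)) * ∏ i, b i ^ (q i : ℕ)) := by
  have hmul : geomKernel L b a = (Matrix.of fun (i : Fin k) (r : Fin L) => a i ^ (r : ℕ)) *
      ((1 : Matrix (Fin L) (Fin L) F).submatrix id Fin.revPerm *
        Matrix.of fun (r : Fin L) (j : Fin k) => b j ^ (r : ℕ)) := by
    rw [Matrix.one_submatrix_mul id Fin.revPerm]
    ext i j
    simp [geomKernel, Matrix.mul_apply]
  rw [hmul, det_mul_eq_sum_prod_mul_det]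
  refine Finset.sum_congr rfl fun p _ => ?_
  rw [Matrix.submatrix_mul _ _ _ _ _ Function.bijective_id, det_mul_eq_sum_det_mul_prod,
    Finset.mul_sum]
  refine Finset.sum_congr rfl fun q _ => ?_
  simp only [Matrix.submatrix_submatrix, Matrix.submatrix_apply, Matrix.of_apply, id,
    Function.comp_def, Fin.revPerm_apply]
  ring

end BlockDeterminant

section Orthogonality

open Matrix

variable {N k R : ℕ} {S T : Type*} [CommRing S] [CommRing T]

lemma map_alternant (f : S →+* T) (d : S[X]) (m : Fin N → ℕ) :
    f (alternant d m) = alternant (d.map f) m := by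
  rw [alternant, RingHom.map_det]
  congr 1
  ext j i
  simp [← coeff_map, Polynomial.map_mul]

lemma alternant_C_mul (c : S) (d : S[X]) (m : Fin N → ℕ) :
    alternant (C c * d) m = c ^ N * alternant d m := by
  have hsmul : (Matrix.of fun (j : Fin N) i => (X ^ (j : ℕ) * (C c * d)).coeff (m i)) =
      c • Matrix.of fun (j : Fin N) i => (X ^ (j : ℕ) * d).coeff (m i) := by
    ext j i
    simp only [Matrix.smul_apply, Matrix.of_apply, mul_left_comm _ (C c), coeff_C_mul, smul_eq_mul]
  rw [alternant, hsmul, Matrix.det_smul, Fintype.card_fin, alternant]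

lemma alternant_reflect {d : S[X]} (hd : d.natDegree ≤ R) (m : Fin k → Fin (R + k)) :
    alternant (reflect R d) (fun i => m i) =
      (Equiv.Perm.sign (Fin.revPerm : Equiv.Perm (Fin k)) : ℤ) *
        alternant d (fun i => (m i).rev) := by
  rw [alternant, alternant, ← Matrix.det_permute]
  congr 1
  ext j i
  have hreflect : X ^ (j : ℕ) * reflect R d = reflect (k - 1 + R) (X ^ (j.rev : ℕ) * d) := by
    rw [reflect_mul _ _ ((natDegree_X_pow_le _).trans (by omega)) hd, reflect_monomial,
      revAt_le (by omega), Fin.val_rev]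
    congr 2
    omega
  simp only [Matrix.submatrix_apply, Matrix.of_apply, hreflect, coeff_reflect, Fin.revPerm_apply,
    id, Fin.val_rev (m i)]
  rw [revAt_le (by omega)]
  congr 1
  have := j.is_lt
  omega

lemma reflect_charpoly_neg {n : Type*} [Fintype n] [DecidableEq n] [Nontrivial S]
    (A : Matrix n n S) : reflect (Fintype.card n) (-A).charpoly = revCharpoly A := by
  have h := reverse_charpoly (-A)
  rw [reverse, charpoly_natDegree_eq_dim] at h
  rw [h, charpolyRev, revCharpoly, Matrix.map_neg _ (fun _ => C_neg), smul_neg, sub_neg_eq_add]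

lemma reflect_revCharpoly_of_mul_eq_one {n : Type*} [Fintype n] [DecidableEq n] [Nontrivial S]
    {A B : Matrix n n S} (h : A * B = 1) :
    reflect (Fintype.card n) (revCharpoly A) = C A.det * revCharpoly B := by
  have hmap : A.map C * B.map C = (1 : Matrix n n S[X]) := by
    rw [← Matrix.map_mul, h, Matrix.map_one _ C_0 C_1]
  rw [← reflect_charpoly_neg, reflect_reflect, revCharpoly, RingHom.map_det, ← Matrix.det_mul,
    RingHom.mapMatrix_apply, mul_add, mul_one, Matrix.mul_smul, hmap, Matrix.charpoly, charmatrix,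
    map_neg, sub_neg_eq_add, add_comm, Matrix.scalar_apply,
    ← Matrix.smul_one_eq_diagonal]
  rfl

lemma map_conj_revCharpoly (θ : unitaryGroup (Fin R) ℂ) :
    (revCharpoly θ.1).map (starRingEnd ℂ) = C θ.1.det⁻¹ * reflect R (revCharpoly θ.1) := by
  have hreflect := reflect_revCharpoly_of_mul_eq_one (mem_unitaryGroup_iff.mp θ.2)
  rw [Fintype.card_fin] at hreflect
  rw [hreflect, ← mul_assoc, ← C_mul, inv_mul_cancel₀ (isUnit_det_unitaryGroup θ).ne_zero, C_1,
    one_mul, revCharpoly, revCharpoly, ← coe_mapRingHom, RingHom.map_det, ← Matrix.det_transpose]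
  congr 1
  ext i j : 2
  simp [Matrix.one_apply, apply_ite, eq_comm]

lemma conj_alternant_revCharpoly (θ : unitaryGroup (Fin R) ℂ) (m : Fin k → Fin (R + k)) :
    starRingEnd ℂ (alternant (revCharpoly θ.1) fun i => m i) =
      (Equiv.Perm.sign (Fin.revPerm : Equiv.Perm (Fin k)) : ℤ) *
        (θ.1.det⁻¹ ^ k * alternant (revCharpoly θ.1) fun i => (m i).rev) := by
  rw [map_alternant, map_conj_revCharpoly, alternant_C_mul,
    alternant_reflect (by simpa using natDegree_revCharpoly_le θ.1), mul_left_comm]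

lemma charProduct_append_mul_det_geomKernel (b a : Fin k → ℂ) (θ : unitaryGroup (Fin R) ℂ) :
    charProduct k (Fin.append b a) θ.1 * (geomKernel k b a).det =
      ∑ p : Fin k → Fin (R + k), ∑ q : Fin k → Fin (R + k),
        alternant (revCharpoly θ.1) (fun i => p i) *
          starRingEnd ℂ (alternant (revCharpoly θ.1) fun i => (q i).rev) *
          ((∏ i, a i ^ (p i : ℕ)) * ∏ i, b i ^ (q i : ℕ)) := by
  have hd : (revCharpoly θ.1).natDegree ≤ R := by
    simpa using natDegree_revCharpoly_le θ.1
  simp only [conj_alternant_revCharpoly, Fin.rev_rev]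
  rw [det_geomKernel_self, charProduct, Fin.prod_univ_add]
  simp only [Fin.append_left, Fin.append_right, ← eval_revCharpoly]
  have hmul := congrArg₂ (· * ·) (sum_alternant hd a) (sum_alternant hd b)
  simp only [Finset.sum_mul_sum] at hmul
  set ε : ℂ := ((Equiv.Perm.sign (Fin.revPerm : Equiv.Perm (Fin k)) : ℤ) : ℂ)
  trans ε * θ.1.det⁻¹ ^ k * (((vandermonde a).det * ∏ i, (revCharpoly θ.1).eval (a i)) *
    ((vandermonde b).det * ∏ i, (revCharpoly θ.1).eval (b i)))
  · ring
  rw [← hmul]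
  simp only [Finset.mul_sum]
  exact Finset.sum_congr rfl fun p _ => Finset.sum_congr rfl fun q _ => by ring

variable (μ : Measure (unitaryGroup (Fin R) ℂ)) [IsProbabilityMeasure μ]

lemma integral_sum_mul_alternant_mul_conj (w : (Fin k → Fin (R + k)) → (Fin k → Fin (R + k)) → ℂ)
    (s t : (Fin k → Fin (R + k)) → Fin k → ℕ) :
    ∫ θ, ∑ p, ∑ q, alternant (revCharpoly θ.1) (s p) *
        starRingEnd ℂ (alternant (revCharpoly θ.1) (t q)) * w p q ∂μ =
      ∑ p, ∑ q, (∫ θ, alternant (revCharpoly θ.1) (s p) *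
        starRingEnd ℂ (alternant (revCharpoly θ.1) (t q)) ∂μ) * w p q := by
  have hcont (m : Fin k → ℕ) :
      Continuous fun θ : unitaryGroup (Fin R) ℂ => alternant (revCharpoly θ.1) m :=
    (continuous_alternant_revCharpoly m).comp continuous_subtype_val
  have hint (p q) : Integrable (fun θ : unitaryGroup (Fin R) ℂ =>
      alternant (revCharpoly θ.1) (s p) *
        starRingEnd ℂ (alternant (revCharpoly θ.1) (t q)) * w p q) μ :=
    integrable_of_continuous_of_compactSpace
      (((hcont _).mul (Complex.continuous_conj.comp (hcont _))).mul continuous_const)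
  rw [integral_finsetSum _ fun p _ => integrable_finsetSum _ fun q _ => hint p q]
  refine Finset.sum_congr rfl fun p _ => ?_
  rw [integral_finsetSum _ fun q _ => hint p q]
  simp only [integral_mul_const]

variable [μ.IsHaarMeasure]

lemma integral_charProduct_append_mul {b a : Fin k → ℂ}
    (hinj : Function.Injective (Fin.append b a)) :
    (∫ θ, charProduct k (Fin.append b a) θ.1 ∂μ) * (geomKernel k b a).det =
      (geomKernel (R + k) b a).det := by
  have hb : Function.Injective b := (Fin.append_injective_iff.mp hinj).1
  have hgap : (gapVandermonde k b a).det ≠ 0 := by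
    rw [← det_vandermonde_append]
    exact Matrix.det_vandermonde_ne_zero_iff.mpr hinj
  refine mul_left_cancel₀ hgap ?_
  rw [← det_gapVandermonde_mul hb, ← det_of_pow_extremalExponent,
    ← det_vandermonde_mul_integral_charProduct μ, det_vandermonde_append, mul_assoc]

lemma integral_alternant_mul_conj_alternant (p q : Fin k → Fin (R + k)) :
    ∫ θ, alternant (revCharpoly θ.1) (fun i => p i) *
        starRingEnd ℂ (alternant (revCharpoly θ.1) fun i => q i) ∂μ =
      ((1 : Matrix (Fin (R + k)) (Fin (R + k)) ℂ).submatrix p q).det := by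
  have hzero := eq_zero_of_forall_sum_mul_prod_pow
    (fun m : Fin (k + k) → Fin (R + k) => (∫ θ, alternant (revCharpoly θ.1)
        (fun i => m (Fin.natAdd k i)) * starRingEnd ℂ (alternant (revCharpoly θ.1) fun i =>
          (m (Fin.castAdd k i)).rev) ∂μ) -
      ((1 : Matrix (Fin (R + k)) (Fin (R + k)) ℂ).submatrix (fun i => m (Fin.natAdd k i))
        fun i => (m (Fin.castAdd k i)).rev).det)
    fun c hc _ => by
      obtain ⟨⟨b, a⟩, rfl⟩ := (Fin.appendEquiv k k).surjective c
      rw [← (Fin.appendEquiv k k).sum_comp, Fintype.sum_prod_type, Finset.sum_comm]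
      simp only [Fin.appendEquiv, Equiv.coe_fn_mk] at hc ⊢
      have hkernel := integral_charProduct_append_mul μ hc
      rw [← integral_mul_const] at hkernel
      simp only [charProduct_append_mul_det_geomKernel] at hkernel
      rw [integral_sum_mul_alternant_mul_conj, det_geomKernel_eq_sum] at hkernel
      simpa only [Fin.append_left, Fin.append_right, Fin.prod_univ_add, sub_mul,
        Finset.sum_sub_distrib, sub_eq_zero, mul_comm (∏ i, b i ^ _)] using hkernel
  have h := congrFun hzero (Fin.append (fun i => (q i).rev) p)
  simpa only [Fin.append_left, Fin.append_right, Fin.rev_rev, Pi.zero_apply, sub_eq_zero] using h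

end Orthogonality

section LatticeFormula

open Matrix

variable {k R : ℕ}

lemma sum_det_one_submatrix_mul {S ι : Type*} [CommRing S] [Fintype ι] [DecidableEq ι]
    {f : (Fin k → ι) → S}
    (hf : ∀ q (σ : Equiv.Perm (Fin k)), f (q ∘ σ) = (Equiv.Perm.sign σ : ℤ) * f q)
    (p : Fin k → ι) :
    ∑ q, ((1 : Matrix ι ι S).submatrix p q).det * f q = k.factorial * f p := by
  have hprod (σ : Equiv.Perm (Fin k)) (q : Fin k → ι) :
      ∏ i, (1 : Matrix ι ι S).submatrix p q (σ i) i = if p ∘ σ = q then 1 else 0 := by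
    simp [Matrix.one_apply, Finset.prod_ite_zero, funext_iff]
  have hsign (σ : Equiv.Perm (Fin k)) : (Equiv.Perm.sign σ : ℤ) * f (p ∘ σ) = f p := by
    rw [hf, ← mul_assoc, ← Int.cast_mul, Int.units_coe_mul_self, Int.cast_one, one_mul]
  simp only [Matrix.det_apply', hprod, Finset.sum_mul]
  rw [Finset.sum_comm]
  simp [hsign, Fintype.card_perm]

lemma integral_norm_sq_sum_mul_alternant {w : (Fin k → Fin (R + k)) → ℂ}
    (hw : ∀ m (σ : Equiv.Perm (Fin k)), w (m ∘ σ) = (Equiv.Perm.sign σ : ℤ) * w m)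
    (μ : Measure (unitaryGroup (Fin R) ℂ)) [IsProbabilityMeasure μ] [μ.IsHaarMeasure] :
    ∫ θ, ‖∑ m, w m * alternant (revCharpoly θ.1) fun i => m i‖ ^ 2 ∂μ =
      k.factorial * ∑ m, ‖w m‖ ^ 2 := by
  have hw' (m) (σ : Equiv.Perm (Fin k)) :
      starRingEnd ℂ (w (m ∘ σ)) = (Equiv.Perm.sign σ : ℤ) * starRingEnd ℂ (w m) := by
    simp [hw]
  have hexpand (θ : unitaryGroup (Fin R) ℂ) :
      (‖∑ m, w m * alternant (revCharpoly θ.1) fun i => m i‖ : ℂ) ^ 2 =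
        ∑ p, ∑ q, alternant (revCharpoly θ.1) (fun i => p i) *
          starRingEnd ℂ (alternant (revCharpoly θ.1) fun i => q i) *
            (w p * starRingEnd ℂ (w q)) := by
    rw [← Complex.mul_conj', map_sum, Finset.sum_mul_sum]
    simp only [map_mul]
    exact Finset.sum_congr rfl fun p _ => Finset.sum_congr rfl fun q _ => by ring
  apply Complex.ofReal_injective
  rw [← integral_complex_ofReal]
  push_cast
  simp only [hexpand]
  rw [integral_sum_mul_alternant_mul_conj]
  simp only [integral_alternant_mul_conj_alternant, mul_left_comm _ (w _), ← Finset.mul_sum,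
    sum_det_one_submatrix_mul (f := fun q => starRingEnd ℂ (w q)) hw']
  simp only [← Complex.mul_conj', Finset.mul_sum, mul_left_comm]

lemma det_vandermonde_comp_perm {S : Type*} [CommRing S] (v : Fin k → S)
    (σ : Equiv.Perm (Fin k)) :
    (vandermonde (v ∘ σ)).det = (Equiv.Perm.sign σ : ℤ) * (vandermonde v).det := by
  rw [← Matrix.det_permute]
  rfl

lemma sum_antidiagonalTuple_prod_coeff {S : Type*} [CommSemiring S] (p : S[X]) (k n : ℕ) :
    ∑ x ∈ Finset.Nat.antidiagonalTuple k n, ∏ i, p.coeff (x i) = (p ^ k).coeff n := by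
  have h := PowerSeries.coeff_prod (fun _ : Fin k => (p : PowerSeries S)) n Finset.univ
  rw [Finset.prod_const, Finset.card_univ, Fintype.card_fin, ← coe_pow, coeff_coe] at h
  rw [h]
  refine (Finset.sum_equiv Finsupp.equivFunOnFinite (fun x => ?_) fun x _ => ?_).symm
  · simp [Finset.mem_finsuppAntidiag, Finset.Nat.mem_antidiagonalTuple]
  · simp

lemma matrixIntegral_eq_integral_norm_coeff_pow (k n : ℕ) (μ : Measure (unitaryGroup (Fin R) ℂ)) :
    matrixIntegral k n R μ = ∫ θ, ‖(revCharpoly θ.1 ^ k).coeff n‖ ^ 2 ∂μ := by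
  simp only [matrixIntegral, ← sum_antidiagonalTuple_prod_coeff]
  rfl

lemma sq_mul_matrixIntegral (k n : ℕ)
    (μ : Measure (unitaryGroup (Fin R) ℂ)) [μ.IsHaarMeasure] [IsProbabilityMeasure μ] :
    ((k.factorial * ∏ i ∈ Finset.range k, i.factorial : ℕ) : ℝ) ^ 2 * matrixIntegral k n R μ =
      k.factorial *
        ∑ m : Fin k → Fin (R + k) with ∑ i, (m i : ℕ) = n + ∑ i : Fin k, (i : ℕ),
          (vandermonde fun i => ((m i : ℕ) : ℝ)).det ^ 2 := by
  set w : (Fin k → Fin (R + k)) → ℂ := fun m =>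
    if ∑ i, (m i : ℕ) = n + ∑ i : Fin k, (i : ℕ) then (vandermonde fun i => ((m i : ℕ) : ℂ)).det
      else 0 with hw
  have hperm (m) (σ : Equiv.Perm (Fin k)) : w (m ∘ σ) = (Equiv.Perm.sign σ : ℤ) * w m := by
    simp only [hw, Function.comp_apply, Equiv.sum_comp σ fun i => (m i : ℕ), mul_ite, mul_zero]
    exact if_congr Iff.rfl (det_vandermonde_comp_perm (fun i => ((m i : ℕ) : ℂ)) σ) rfl
  have hcoeff (θ : unitaryGroup (Fin R) ℂ) :
      ((k.factorial * ∏ i ∈ Finset.range k, i.factorial : ℕ) : ℂ) *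
          (revCharpoly θ.1 ^ k).coeff n =
        ∑ m, w m * alternant (revCharpoly θ.1) fun i => m i := by
    rw [factorial_mul_coeff_pow_eq_sum_alternant (by simpa using natDegree_revCharpoly_le θ.1),
      Finset.sum_filter]
    simp only [hw, ite_mul, zero_mul, mul_comm (alternant _ _)]
  have hnorm (m) : ‖w m‖ ^ 2 = if ∑ i, (m i : ℕ) = n + ∑ i : Fin k, (i : ℕ) then
      (vandermonde fun i => ((m i : ℕ) : ℝ)).det ^ 2 else 0 := by
    have hdet : (vandermonde fun i => ((m i : ℕ) : ℂ)).det =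
        ((vandermonde fun i => ((m i : ℕ) : ℝ)).det : ℝ) := by
      simp [det_vandermonde]
    simp only [hw]
    split_ifs
    · rw [hdet, Complex.norm_real, Real.norm_eq_abs, sq_abs]
    · simp
  rw [matrixIntegral_eq_integral_norm_coeff_pow, ← integral_const_mul, Finset.sum_filter]
  simp only [← hnorm, ← integral_norm_sq_sum_mul_alternant hperm μ, ← hcoeff, norm_mul,
    Complex.norm_natCast, mul_pow]

lemma matrixIntegral_eq_latticeSum (k n : ℕ)
    (μ : Measure (unitaryGroup (Fin R) ℂ)) [μ.IsHaarMeasure] [IsProbabilityMeasure μ] :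
    matrixIntegral k n R μ =
      1 / ((k.factorial : ℝ) * (∏ i ∈ Finset.range k, (Nat.factorial i : ℝ)) ^ 2) *
        ∑ m : Fin k → Fin (R + k) with ∑ i, (m i : ℕ) = n + ∑ i : Fin k, (i : ℕ),
          (vandermonde fun i => ((m i : ℕ) : ℝ)).det ^ 2 := by
  have h := sq_mul_matrixIntegral k n μ
  push_cast at h
  have hprod : ∏ i ∈ Finset.range k, (Nat.factorial i : ℝ) ≠ 0 := by positivity
  field_simp
  field_simp at h
  linear_combination h

end LatticeFormula

section HyperplaneSections

variable {d : ℕ}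

/-- The point `(y₁, …, y_d, c - (y₁ + ⋯ + y_d))` of the hyperplane with coordinate sum `c`, used
both for real points and for lattice points. -/
def hyperplanePoint {A : Type*} [AddCommGroup A] (c : A) (y : Fin d → A) : Fin (d + 1) → A :=
  Fin.snoc (α := fun _ => A) y (c - ∑ i, y i)

@[simp]
lemma hyperplanePoint_castSucc {A : Type*} [AddCommGroup A] (c : A) (y : Fin d → A) (i : Fin d) :
    hyperplanePoint c y i.castSucc = y i :=
  Fin.snoc_castSucc ..

@[simp]
lemma hyperplanePoint_last {A : Type*} [AddCommGroup A] (c : A) (y : Fin d → A) :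
    hyperplanePoint c y (Fin.last d) = c - ∑ i, y i :=
  Fin.snoc_last ..

lemma sum_hyperplanePoint {A : Type*} [AddCommGroup A] (c : A) (y : Fin d → A) :
    ∑ j, hyperplanePoint c y j = c := by
  simp [Fin.sum_univ_castSucc]

lemma hyperplanePoint_castSucc_eq {A : Type*} [AddCommGroup A] {c : A} {x : Fin (d + 1) → A}
    (hx : ∑ j, x j = c) : hyperplanePoint c (fun i => x i.castSucc) = x := by
  rw [Fin.sum_univ_castSucc] at hx
  funext j
  refine Fin.lastCases ?_ (fun i => ?_) j
  · simp [← hx]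
  · simp

lemma wFull_eq_hyperplanePoint (c : ℝ) (y : Fin d → ℝ) :
    wFull (d + 1) c y = hyperplanePoint c y := by
  funext j
  refine Fin.lastCases ?_ (fun i => ?_) j <;> simp [wFull]

lemma continuous_hyperplanePoint (c : ℝ) :
    Continuous (hyperplanePoint c : (Fin d → ℝ) → Fin (d + 1) → ℝ) := by
  refine continuous_pi fun j => Fin.lastCases ?_ (fun i => ?_) j
  · simp only [hyperplanePoint_last]
    fun_prop
  · simp only [hyperplanePoint_castSucc]
    fun_prop

lemma mem_Dregion_iff {c : ℝ} {y : Fin d → ℝ} :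
    y ∈ Dregion (d + 1) c ↔ hyperplanePoint c y ∈ Set.Icc (0 : Fin (d + 1) → ℝ) 1 := by
  simp only [Set.mem_Icc, Pi.le_def, Fin.forall_fin_succ' (n := d), hyperplanePoint_castSucc,
    hyperplanePoint_last]
  simp only [Dregion, Set.mem_Icc, Pi.zero_apply, Pi.one_apply]
  exact ⟨fun h => ⟨⟨fun i => (h.1 i).1, h.2.1⟩, fun i => (h.1 i).2, h.2.2⟩,
    fun h => ⟨fun i => ⟨h.1.1 i, h.2.1 i⟩, h.1.2, h.2.2⟩⟩

lemma isCompact_Dregion (c : ℝ) : IsCompact (Dregion (d + 1) c) := by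
  refine (isCompact_Icc (a := (0 : Fin d → ℝ)) (b := 1)).of_isClosed_subset ?_
    fun y hy => ⟨fun i => (hy.1 i).1, fun i => (hy.1 i).2⟩
  have hpreimage : Dregion (d + 1) c = hyperplanePoint c ⁻¹' Set.Icc 0 1 :=
    Set.ext fun y => mem_Dregion_iff
  rw [hpreimage]
  exact isClosed_Icc.preimage (continuous_hyperplanePoint c)

lemma indicator_Dregion (c : ℝ) (f : (Fin (d + 1) → ℝ) → ℝ) :
    (Dregion (d + 1) c).indicator (fun y => f (hyperplanePoint c y)) =
      fun y : Fin d → ℝ => (Set.Icc 0 1).indicator f (hyperplanePoint c y) := by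
  funext y
  simp only [Set.indicator]
  congr 1
  exact propext mem_Dregion_iff

lemma setIntegral_Dregion_eq (c : ℝ) (f : (Fin (d + 1) → ℝ) → ℝ) :
    ∫ y in Dregion (d + 1) c, f (hyperplanePoint c y) =
      ∫ y, (Set.Icc 0 1).indicator f (hyperplanePoint c y) := by
  rw [← integral_indicator (isCompact_Dregion c).measurableSet, ← indicator_Dregion]

lemma integrable_indicator_comp_hyperplanePoint {f : (Fin (d + 1) → ℝ) → ℝ} (hf : Continuous f)
    (c : ℝ) : Integrable fun y : Fin d → ℝ => (Set.Icc 0 1).indicator f (hyperplanePoint c y) := by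
  rw [← indicator_Dregion]
  exact (integrable_indicator_iff (isCompact_Dregion c).measurableSet).2
    ((hf.comp (continuous_hyperplanePoint c)).continuousOn.integrableOn_compact
      (isCompact_Dregion c))

end HyperplaneSections

section FloorMap

variable {d : ℕ}

lemma measurePreserving_floor (d : ℕ) :
    MeasurePreserving (fun (y : Fin d → ℝ) i => ⌊y i⌋) volume Measure.count := by
  have hmeas : Measurable fun (y : Fin d → ℝ) i => ⌊y i⌋ := by fun_prop
  refine ⟨hmeas, Measure.ext_of_singleton fun p => ?_⟩
  have hcell : (fun (y : Fin d → ℝ) i => ⌊y i⌋) ⁻¹' {p} =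
      Set.univ.pi fun i => Set.Ico (p i : ℝ) (p i + 1) := by
    ext y
    simp [funext_iff, Int.floor_eq_iff]
  rw [Measure.map_apply hmeas (measurableSet_singleton p), hcell, volume_pi_pi]
  simp

lemma integrable_count_of_eq_zero_of_notMem {g : (Fin d → ℤ) → ℝ} {s : Finset (Fin d → ℤ)}
    (hg : ∀ p ∉ s, g p = 0) : Integrable g Measure.count :=
  integrable_count_iff.2 <| summable_of_ne_finset_zero (s := s) fun p hp => by simp [hg p hp]

lemma integrable_comp_floor_smul {r : ℝ} (hr : r ≠ 0) {g : (Fin d → ℤ) → ℝ}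
    {s : Finset (Fin d → ℤ)} (hg : ∀ p ∉ s, g p = 0) :
    Integrable fun y : Fin d → ℝ => g fun i => ⌊r * y i⌋ :=
  ((measurePreserving_floor d).integrable_comp_of_integrable
    (integrable_count_of_eq_zero_of_notMem hg)).comp_smul hr

lemma integral_comp_floor_smul {r : ℝ} (hr : 0 ≤ r) {g : (Fin d → ℤ) → ℝ}
    {s : Finset (Fin d → ℤ)} (hg : ∀ p ∉ s, g p = 0) :
    ∫ y : Fin d → ℝ, g (fun i => ⌊r * y i⌋) = (∑ p ∈ s, g p) / r ^ d := by
  have hcount := integrable_count_of_eq_zero_of_notMem hg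
  have hscale := Measure.integral_comp_smul_of_nonneg (volume : Measure (Fin d → ℝ))
    (fun y => g fun i => ⌊y i⌋) r (hR := hr)
  simp only [Pi.smul_apply, smul_eq_mul, Module.finrank_fin_fun] at hscale
  have hmap : ∫ y : Fin d → ℝ, g (fun i => ⌊y i⌋) = ∫ p, g p ∂Measure.count := by
    rw [← (measurePreserving_floor d).map_eq]
    exact (integral_map (measurePreserving_floor d).measurable.aemeasurable
      ((measurePreserving_floor d).map_eq ▸ hcount.aestronglyMeasurable)).symm
  rw [hscale, hmap, integral_countable hcount, inv_mul_eq_div, tsum_eq_sum (s := s)]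
  · simp [Measure.real]
  · intro p hp
    simp [hg p hp]

end FloorMap

section BoundaryLayer

variable {d : ℕ}

lemma volume_real_le_of_fiber_subset {i : Fin (d + 1)} {S : Set (Fin (d + 1) → ℝ)} {B δ : ℝ}
    (hS : MeasurableSet S) (hδ : 0 ≤ δ) (hB : 0 ≤ B) (hbox : S ⊆ Set.Icc 0 fun _ => B)
    (hfiber : ∀ z : Fin d → ℝ, ∃ t, {s | i.insertNth s z ∈ S} ⊆ Metric.closedBall t δ) :
    volume.real S ≤ 2 * δ * B ^ d := by
  choose t ht using hfiber
  have hpres := (volume_preserving_piFinSuccAbove (fun _ : Fin (d + 1) => ℝ) i).symm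
  have hle (z : Fin d → ℝ) : volume {s | i.insertNth s z ∈ S} ≤
      (Set.Icc 0 fun _ => B).indicator (fun _ => ENNReal.ofReal (2 * δ)) z := by
    by_cases hz : z ∈ Set.Icc (0 : Fin d → ℝ) fun _ => B
    · rw [Set.indicator_of_mem hz, ← Real.volume_closedBall (t z)]
      exact measure_mono (ht z)
    · suffices {s | i.insertNth s z ∈ S} = ∅ by simp [this]
      refine Set.eq_empty_of_forall_notMem fun s hs => hz ⟨fun l => ?_, fun l => ?_⟩
      · simpa using (hbox hs).1 (i.succAbove l)
      · simpa using (hbox hs).2 (i.succAbove l)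
  have hvol : volume S ≤ ENNReal.ofReal (2 * δ * B ^ d) := by
    rw [← hpres.measure_preimage hS.nullMeasurableSet, Measure.volume_eq_prod,
      Measure.prod_apply_symm (hpres.measurable hS)]
    refine (lintegral_mono hle).trans_eq ?_
    rw [lintegral_indicator_const measurableSet_Icc, Real.volume_Icc_pi,
      ENNReal.ofReal_mul (p := 2 * δ) (by positivity), ENNReal.ofReal_pow hB]
    simp
  exact ENNReal.toReal_le_of_le_ofReal (by positivity) hvol

/-- The points `y` of the box `[0, B]^d` for which the `j`-th coordinate of `(y, c - ∑ y)` is within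
`δ` of `b`. -/
def hyperplaneSlab (d : ℕ) (B c δ b : ℝ) (j : Fin (d + 1)) : Set (Fin d → ℝ) :=
  Set.Icc 0 (fun _ => B) ∩ (fun y => hyperplanePoint c y j) ⁻¹' Metric.closedBall b δ

lemma isClosed_hyperplaneSlab (B c δ b : ℝ) (j : Fin (d + 1)) :
    IsClosed (hyperplaneSlab d B c δ b j) :=
  isClosed_Icc.inter (Metric.isClosed_closedBall.preimage
    ((continuous_apply j).comp (continuous_hyperplanePoint c)))

lemma volume_real_hyperplaneSlab_le {B δ : ℝ} (hB : 0 ≤ B) (hδ : 0 ≤ δ) (c b : ℝ)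
    (j : Fin (d + 2)) : volume.real (hyperplaneSlab (d + 1) B c δ b j) ≤ 2 * δ * B ^ d := by
  have hS := (isClosed_hyperplaneSlab B c δ b j).measurableSet
  refine Fin.lastCases (fun hS => ?_) (fun i hS => ?_) j hS
  · refine volume_real_le_of_fiber_subset (i := 0) hS hδ hB Set.inter_subset_left
      fun z => ⟨c - ∑ l, z l - b, fun s hs => ?_⟩
    have h := hs.2
    simp only [Set.mem_preimage, hyperplanePoint_last, Fin.insertNth_zero', Fin.sum_cons,
      Metric.mem_closedBall, Real.dist_eq] at h ⊢
    rw [abs_sub_comm]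
    convert h using 2
    ring
  · refine volume_real_le_of_fiber_subset (i := i) hS hδ hB Set.inter_subset_left
      fun z => ⟨b, fun s hs => ?_⟩
    simpa using hs.2

/-- The points `y` of the box `[0, B]^d` for which some coordinate of `(y, c - ∑ y)` is within `δ`
of an endpoint of `[0, 1]`. -/
def boundaryLayer (d : ℕ) (B c δ : ℝ) : Set (Fin d → ℝ) :=
  ⋃ j, hyperplaneSlab d B c δ 0 j ∪ hyperplaneSlab d B c δ 1 j

lemma boundaryLayer_subset_Icc (B c δ : ℝ) : boundaryLayer d B c δ ⊆ Set.Icc 0 fun _ => B :=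
  Set.iUnion_subset fun _ => Set.union_subset Set.inter_subset_left Set.inter_subset_left

lemma measurableSet_boundaryLayer (B c δ : ℝ) : MeasurableSet (boundaryLayer d B c δ) :=
  .iUnion fun j => (isClosed_hyperplaneSlab B c δ 0 j).measurableSet.union
    (isClosed_hyperplaneSlab B c δ 1 j).measurableSet

lemma volume_real_boundaryLayer_le {B δ : ℝ} (hB : 0 ≤ B) (hδ : 0 ≤ δ) (c : ℝ) :
    volume.real (boundaryLayer (d + 1) B c δ) ≤ (d + 2) * (4 * δ * B ^ d) := by
  calc volume.real (boundaryLayer (d + 1) B c δ)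
      ≤ ∑ _j : Fin (d + 2), (2 * δ * B ^ d + 2 * δ * B ^ d) :=
        (measureReal_iUnion_fintype_le _).trans (Finset.sum_le_sum fun j _ =>
          (measureReal_union_le _ _).trans (add_le_add (volume_real_hyperplaneSlab_le hB hδ c 0 j)
            (volume_real_hyperplaneSlab_le hB hδ c 1 j)))
    _ = (d + 2) * (4 * δ * B ^ d) := by
        simp only [Finset.sum_const, Finset.card_univ, Fintype.card_fin, nsmul_eq_mul]
        push_cast
        ring

end BoundaryLayer

section LatticeSums

variable {d : ℕ}

lemma mem_Icc_zero_one_add_iff {ι : Type*} {x x' : ι → ℝ} {a ε : ℝ} (ha : 0 ≤ a)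
    (hxx' : ∀ j, |x' j - x j| ≤ ε) (h0 : ∀ j, ε + a < |x j|) (h1 : ∀ j, ε + a < |x j - 1|) :
    (x' ∈ Set.Icc 0 fun _ => 1 + a) ↔ x ∈ Set.Icc 0 1 := by
  simp only [Set.mem_Icc, Pi.le_def, ← forall_and, Pi.zero_apply, Pi.one_apply]
  refine forall_congr' fun j => ?_
  have hclose := abs_le.1 (hxx' j)
  constructor <;> rintro ⟨hlower, hupper⟩ <;>
    rcases lt_abs.1 (h0 j) with h0 | h0 <;> rcases lt_abs.1 (h1 j) with h1 | h1 <;>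
    constructor <;> linarith

lemma abs_indicator_sub_indicator_le {ι : Type*} [Fintype ι] {f : (ι → ℝ) → ℝ} {x x' : ι → ℝ}
    {Λ : NNReal} {a B ε : ℝ} (hf : LipschitzOnWith Λ f (Set.Icc 0 fun _ => B))
    (ha : 0 ≤ a) (haB : 1 + a ≤ B) (hε : 0 ≤ ε) (hxx' : ∀ j, |x' j - x j| ≤ ε)
    (h0 : ∀ j, ε + a < |x j|) (h1 : ∀ j, ε + a < |x j - 1|) :
    |(Set.Icc 0 fun _ => 1 + a).indicator f x' - (Set.Icc 0 1).indicator f x| ≤ Λ * ε := by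
  have hiff := mem_Icc_zero_one_add_iff ha hxx' h0 h1
  by_cases hx : x ∈ Set.Icc 0 1
  · rw [Set.indicator_of_mem hx, Set.indicator_of_mem (hiff.2 hx), ← Real.dist_eq]
    have hsub : (Set.Icc 0 fun _ => 1 + a : Set (ι → ℝ)) ⊆ Set.Icc 0 fun _ => B :=
      Set.Icc_subset_Icc_right fun _ => haB
    refine (hf.dist_le_mul _ (hsub (hiff.2 hx)) _ ⟨hx.1, fun j => ?_⟩).trans ?_
    · exact (hx.2 j).trans (by simp only [Pi.one_apply]; linarith)
    · exact mul_le_mul_of_nonneg_left ((dist_pi_le_iff hε).2 hxx') Λ.2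
  · rw [Set.indicator_of_notMem hx, Set.indicator_of_notMem (hx ∘ hiff.1), sub_zero, abs_zero]
    positivity

/-- The value of `f`, cut off outside `[0, 1 + d/R]^(d+1)`, at `R⁻¹` times the lattice point with
coordinate sum `N` whose first `d` coordinates are `p`. -/
noncomputable def latticeValue (f : (Fin (d + 1) → ℝ) → ℝ) (R N : ℕ) (p : Fin d → ℤ) : ℝ :=
  (Set.Icc 0 fun _ => 1 + (d : ℝ) / R).indicator f
    fun j => ((hyperplanePoint (N : ℤ) p j : ℤ) : ℝ) / R

lemma div_mem_Icc_iff {R : ℕ} (hR : 0 < R) (x : Fin (d + 1) → ℤ) :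
    ((fun j => (x j : ℝ) / R) ∈ Set.Icc 0 fun _ => 1 + (d : ℝ) / R) ↔
      ∀ j, 0 ≤ x j ∧ x j < R + (d + 1) := by
  have hR' : (0 : ℝ) < R := by exact_mod_cast hR
  simp only [Set.mem_Icc, Pi.le_def, ← forall_and, Pi.zero_apply]
  refine forall_congr' fun j => and_congr ?_ ?_
  · rw [le_div_iff₀ hR', zero_mul, Int.cast_nonneg_iff]
  · rw [div_le_iff₀ hR', add_mul, div_mul_cancel₀ _ hR'.ne', one_mul, ← add_assoc,
      Int.lt_add_one_iff]
    exact_mod_cast Iff.rfl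

/-- The first `d` coordinates of the points of `{0, …, L-1}^(d+1)` with coordinate sum `N`. -/
def latticeProjection (d L N : ℕ) : Finset (Fin d → ℤ) :=
  ({m | ∑ i, (m i : ℕ) = N} : Finset (Fin (d + 1) → Fin L)).image
    fun m i => ((m i.castSucc : ℕ) : ℤ)

lemma hyperplanePoint_natCast {L N : ℕ} {m : Fin (d + 1) → Fin L} (hm : ∑ i, (m i : ℕ) = N) :
    hyperplanePoint (N : ℤ) (fun i => ((m i.castSucc : ℕ) : ℤ)) = fun j => ((m j : ℕ) : ℤ) :=
  hyperplanePoint_castSucc_eq (x := fun j => ((m j : ℕ) : ℤ)) (by rw [← hm, Nat.cast_sum])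

lemma latticeValue_eq_zero_of_notMem (f : (Fin (d + 1) → ℝ) → ℝ) {R N : ℕ} (hR : 0 < R)
    {p : Fin d → ℤ} (hp : p ∉ latticeProjection d (R + (d + 1)) N) : latticeValue f R N p = 0 := by
  refine Set.indicator_of_notMem (fun hmem => hp ?_) f
  have hbound := (div_mem_Icc_iff hR _).1 hmem
  have hcast (j : Fin (d + 1)) := Int.toNat_of_nonneg (hbound j).1
  refine Finset.mem_image.2 ⟨fun j => ⟨(hyperplanePoint (N : ℤ) p j).toNat, ?_⟩, ?_, ?_⟩
  · have := (hbound j).2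
    omega
  · refine Finset.mem_filter.2 ⟨Finset.mem_univ _, ?_⟩
    rw [← Nat.cast_inj (R := ℤ), Nat.cast_sum]
    simp only [hcast, sum_hyperplanePoint]
  · funext i
    rw [hcast, hyperplanePoint_castSucc]

lemma sum_latticeValue (f : (Fin (d + 1) → ℝ) → ℝ) {R N : ℕ} (hR : 0 < R) :
    ∑ p ∈ latticeProjection d (R + (d + 1)) N, latticeValue f R N p =
      ∑ m : Fin (d + 1) → Fin (R + (d + 1)) with ∑ i, (m i : ℕ) = N, f fun j => (m j : ℕ) / R := by
  rw [latticeProjection, Finset.sum_image]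
  · refine Finset.sum_congr rfl fun m hm => ?_
    rw [latticeValue, hyperplanePoint_natCast (Finset.mem_filter.1 hm).2,
      Set.indicator_of_mem ((div_mem_Icc_iff hR _).2 fun j => ⟨by positivity, ?_⟩)]
    · simp
    · exact_mod_cast (m j).isLt
  · intro m hm m' hm' heq
    have heq' := congrArg (hyperplanePoint (N : ℤ)) heq
    simp only [hyperplanePoint_natCast (Finset.mem_filter.1 hm).2,
      hyperplanePoint_natCast (Finset.mem_filter.1 hm').2] at heq'
    funext j
    exact Fin.ext (by exact_mod_cast congrFun heq' j)

lemma abs_hyperplanePoint_floor_sub_le {R : ℕ} (hR : 0 < R) (n e : ℕ) (y : Fin d → ℝ)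
    (j : Fin (d + 1)) :
    |((hyperplanePoint ((n + e : ℕ) : ℤ) (fun i => ⌊R * y i⌋) j : ℤ) : ℝ) / R -
      hyperplanePoint ((n : ℝ) / R) y j| ≤ (e + d + 1) / R := by
  have hR' : (0 : ℝ) < R := by exact_mod_cast hR
  have hfract (i : Fin d) : y i - (⌊R * y i⌋ : ℝ) / R = Int.fract (R * y i) / R := by
    rw [← Int.self_sub_floor, sub_div, mul_div_cancel_left₀ _ hR'.ne']
  refine Fin.lastCases ?_ (fun i => ?_) j
  · have heq : ((hyperplanePoint ((n + e : ℕ) : ℤ) (fun i => ⌊R * y i⌋) (Fin.last d) : ℤ) : ℝ) / R -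
        hyperplanePoint ((n : ℝ) / R) y (Fin.last d) = (e + ∑ i, Int.fract (R * y i)) / R := by
      rw [add_div, Finset.sum_div, ← Finset.sum_congr rfl fun i _ => hfract i,
        Finset.sum_sub_distrib, ← Finset.sum_div]
      simp only [hyperplanePoint_last]
      push_cast
      ring
    have hsum : ∑ i, Int.fract (R * y i) ≤ d := by
      simpa using Finset.sum_le_card_nsmul Finset.univ _ _ fun i _ =>
        (Int.fract_lt_one ((R : ℝ) * y i)).le
    have hnonneg : 0 ≤ ∑ i, Int.fract (R * y i) := Finset.sum_nonneg fun i _ => Int.fract_nonneg _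
    rw [heq, abs_of_nonneg (div_nonneg (add_nonneg e.cast_nonneg hnonneg) hR'.le)]
    refine div_le_div_of_nonneg_right ?_ hR'.le
    linarith
  · rw [hyperplanePoint_castSucc, hyperplanePoint_castSucc, abs_sub_comm, hfract,
      abs_of_nonneg (div_nonneg (Int.fract_nonneg _) hR'.le)]
    refine div_le_div_of_nonneg_right ?_ hR'.le
    have := (Int.fract_lt_one ((R : ℝ) * y i)).le
    linarith [(Nat.cast_nonneg e : (0 : ℝ) ≤ e), (Nat.cast_nonneg d : (0 : ℝ) ≤ d)]

lemma mem_Icc_of_floor_div_mem_Icc {R N : ℕ} (hR : 1 ≤ R) {y : Fin d → ℝ}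
    (hy : (fun j => ((hyperplanePoint (N : ℤ) (fun i => ⌊R * y i⌋) j : ℤ) : ℝ) / R) ∈
      Set.Icc 0 fun _ => 1 + (d : ℝ) / R) : y ∈ Set.Icc 0 fun _ => (d + 2 : ℝ) := by
  have hR' : (1 : ℝ) ≤ R := by exact_mod_cast hR
  have hbound := (div_mem_Icc_iff hR _).1 hy
  have hfloor (i : Fin d) : 0 ≤ ⌊R * y i⌋ ∧ ⌊R * y i⌋ < R + (d + 1) := by
    simpa using hbound i.castSucc
  refine ⟨fun i => ?_, fun i => ?_⟩
  · exact nonneg_of_mul_nonneg_right (Int.floor_nonneg.1 (hfloor i).1) (by linarith)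
  · have hlt : (R : ℝ) * y i < R + (d + 1) := by
      simpa using Int.floor_lt.1 (hfloor i).2
    refine le_of_mul_le_mul_left (hlt.le.trans ?_) (by linarith : (0 : ℝ) < R)
    nlinarith

lemma abs_latticeValue_sub_indicator_le {f : (Fin (d + 1) → ℝ) → ℝ} {Λ : NNReal} {M : ℝ}
    (hf : LipschitzOnWith Λ f (Set.Icc 0 fun _ => d + 1))
    (hM : ∀ x ∈ Set.Icc 0 fun _ => (d + 1 : ℝ), |f x| ≤ M) {R : ℕ} (hR : 1 ≤ R) (n e : ℕ)
    (y : Fin d → ℝ) :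
    |latticeValue f R (n + e) (fun i => ⌊R * y i⌋) -
      (Set.Icc 0 1).indicator f (hyperplanePoint ((n : ℝ) / R) y)| ≤
    (Set.Icc 0 fun _ => (d + 2 : ℝ)).indicator (fun _ => Λ * ((e + d + 1) / R : ℝ)) y +
      (boundaryLayer d (d + 2) ((n : ℝ) / R) ((e + d + 1) / R + d / R)).indicator
        (fun _ => 2 * M) y := by
  have hdR : (d : ℝ) / R ≤ d := div_le_self (Nat.cast_nonneg d) (by exact_mod_cast hR)
  have hfM {b : ℝ} (hb : b ≤ d + 1) (x : Fin (d + 1) → ℝ) :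
      |(Set.Icc 0 fun _ => b).indicator f x| ≤ M := by
    by_cases hx : x ∈ Set.Icc 0 fun _ => b
    · rw [Set.indicator_of_mem hx]
      exact hM x (Set.Icc_subset_Icc_right (fun _ => hb) hx)
    · rw [Set.indicator_of_notMem hx, abs_zero]
      exact (abs_nonneg _).trans (hM 0 ⟨le_rfl, fun _ => by positivity⟩)
  have hM0 : 0 ≤ M := (abs_nonneg _).trans (hfM le_rfl 0)
  by_cases hbox : y ∈ Set.Icc 0 fun _ => (d + 2 : ℝ)
  · rw [Set.indicator_of_mem hbox]
    by_cases hlayer :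
        y ∈ boundaryLayer d (d + 2) ((n : ℝ) / R) ((e + d + 1) / R + d / R)
    · rw [Set.indicator_of_mem hlayer]
      refine ((abs_sub _ _).trans (add_le_add (hfM (by linarith) _)
        (hfM (b := 1) (by linarith [(Nat.cast_nonneg d : (0 : ℝ) ≤ d)]) _))).trans ?_
      rw [← two_mul]
      exact le_add_of_nonneg_left (by positivity)
    · rw [Set.indicator_of_notMem hlayer, add_zero]
      simp only [boundaryLayer, hyperplaneSlab, Set.mem_iUnion, Set.mem_union, Set.mem_inter_iff,
        hbox, true_and, Set.mem_preimage, Metric.mem_closedBall, Real.dist_eq, sub_zero, not_exists,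
        not_or, not_le] at hlayer
      exact abs_indicator_sub_indicator_le hf (by positivity) (by linarith) (by positivity)
        (abs_hyperplanePoint_floor_sub_le hR n e y) (fun j => (hlayer j).1) fun j => (hlayer j).2
  · have hregion : hyperplanePoint ((n : ℝ) / R) y ∉ Set.Icc 0 1 := fun h => hbox
      ⟨fun i => by simpa using h.1 i.castSucc, fun i => (h.2 i.castSucc).trans' (by simp) |>.trans
        (by simp only [Pi.one_apply]; linarith [(Nat.cast_nonneg d : (0 : ℝ) ≤ d)])⟩
    rw [latticeValue, Set.indicator_of_notMem fun h => hbox (mem_Icc_of_floor_div_mem_Icc hR h),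
      Set.indicator_of_notMem hregion, sub_zero, abs_zero]
    exact add_nonneg (Set.indicator_nonneg (fun _ _ => by positivity) y)
      (Set.indicator_nonneg (fun _ _ => by positivity) y)

lemma abs_integral_le_of_le_indicator_boundaryLayer {F : (Fin (d + 1) → ℝ) → ℝ} {B α β c δ : ℝ}
    (hB : 0 ≤ B) (hβ : 0 ≤ β) (hδ : 0 ≤ δ)
    (hF : ∀ y, |F y| ≤ (Set.Icc 0 fun _ => B).indicator (fun _ => α) y +
      (boundaryLayer (d + 1) B c δ).indicator (fun _ => β) y) :
    |∫ y, F y| ≤ α * B ^ (d + 1) + β * ((d + 2) * (4 * δ * B ^ d)) := by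
  have hlayer := measurableSet_boundaryLayer (d := d + 1) B c δ
  have hfinite : volume (boundaryLayer (d + 1) B c δ) ≠ ⊤ :=
    ((measure_mono (boundaryLayer_subset_Icc B c δ)).trans_lt isCompact_Icc.measure_lt_top).ne
  have hintBox : Integrable ((Set.Icc 0 fun _ => B : Set (Fin (d + 1) → ℝ)).indicator fun _ => α) :=
    (integrable_indicator_iff measurableSet_Icc).2
      (integrableOn_const isCompact_Icc.measure_lt_top.ne)
  have hintLayer : Integrable ((boundaryLayer (d + 1) B c δ).indicator fun _ => β) :=
    (integrable_indicator_iff hlayer).2 (integrableOn_const hfinite)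
  refine (norm_integral_le_of_norm_le (f := F) (hintBox.add hintLayer) (.of_forall hF)).trans ?_
  rw [integral_add' hintBox hintLayer, integral_indicator_const _ measurableSet_Icc,
    integral_indicator_const _ hlayer, smul_eq_mul, smul_eq_mul, mul_comm _ β, mul_comm _ α,
    Measure.real, Real.volume_Icc_pi_toReal (a := (0 : Fin (d + 1) → ℝ)) (fun _ => hB)]
  simp only [Pi.zero_apply, sub_zero, Finset.prod_const, Finset.card_univ, Fintype.card_fin]
  gcongr
  exact volume_real_boundaryLayer_le hB hδ c

theorem exists_abs_latticeSum_sub_setIntegral_le {f : (Fin (d + 2) → ℝ) → ℝ}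
    (hf : LocallyLipschitz f) (e : ℕ) :
    ∃ C > 0, ∀ R n : ℕ, 1 ≤ R →
      |(∑ m : Fin (d + 2) → Fin (R + (d + 2)) with ∑ i, (m i : ℕ) = n + e,
          f fun j => (m j : ℕ) / R) / (R : ℝ) ^ (d + 1) -
        ∫ y in Dregion (d + 2) ((n : ℝ) / R), f (hyperplanePoint ((n : ℝ) / R) y)| ≤ C / R := by
  have hQ : IsCompact (Set.Icc 0 fun _ => ((d + 1 : ℕ) + 1 : ℝ) : Set (Fin (d + 2) → ℝ)) :=
    isCompact_Icc
  obtain ⟨Λ, hΛ⟩ := hf.locallyLipschitzOn.exists_lipschitzOnWith_of_compact hQ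
  obtain ⟨M, hM⟩ := hQ.exists_bound_of_continuousOn hf.continuous.continuousOn
  have hM0 : 0 ≤ M := (norm_nonneg _).trans (hM 0 ⟨le_rfl, fun _ => by positivity⟩)
  set B : ℝ := (d + 1 : ℕ) + 2
  set a : ℝ := e + (d + 1 : ℕ) + 1
  refine ⟨Λ * a * B ^ (d + 1) + 2 * M * ((d + 2) * (4 * (a + (d + 1 : ℕ)) * B ^ d)) + 1,
    by positivity, fun R n hR => ?_⟩
  have hzero (p) (hp : p ∉ latticeProjection (d + 1) (R + (d + 2)) (n + e)) :=
    latticeValue_eq_zero_of_notMem f hR hp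
  rw [setIntegral_Dregion_eq, ← sum_latticeValue f hR,
    ← integral_comp_floor_smul (Nat.cast_nonneg R) hzero,
    ← integral_sub (integrable_comp_floor_smul (by positivity) hzero)
      (integrable_indicator_comp_hyperplanePoint hf.continuous _)]
  refine (abs_integral_le_of_le_indicator_boundaryLayer (by positivity) (by positivity)
    (by positivity) (abs_latticeValue_sub_indicator_le hΛ hM hR n e)).trans ?_
  rw [← add_div, le_div_iff₀ (by positivity : (0 : ℝ) < R)]
  field_simp
  linarith

end LatticeSums

section Asymptotics

variable {k : ℕ}

lemma prod_lt_sub_sq_eq_det_vandermonde_sq (x : Fin k → ℝ) :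
    ∏ p ∈ Finset.univ.filter (fun p : Fin k × Fin k => p.1 < p.2), (x p.1 - x p.2) ^ 2 =
      (Matrix.vandermonde x).det ^ 2 := by
  rw [Matrix.det_vandermonde, Finset.prod_filter, Fintype.prod_prod_type, ← Finset.prod_pow]
  refine Finset.prod_congr rfl fun i _ => ?_
  rw [← Finset.prod_filter, Finset.filter_lt_eq_Ioi, ← Finset.prod_pow]
  exact Finset.prod_congr rfl fun j _ => by ring

lemma det_vandermonde_smul {R : Type*} [CommRing R] (r : R) (x : Fin k → R) :
    (Matrix.vandermonde (r • x)).det = r ^ (∑ i : Fin k, (i : ℕ)) * (Matrix.vandermonde x).det := by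
  rw [← Finset.prod_pow_eq_pow_sum, ← Matrix.det_mul_row]
  congr 1
  ext i j
  simp [Matrix.vandermonde_apply, mul_pow]

lemma locallyLipschitz_det_vandermonde_sq :
    LocallyLipschitz fun x : Fin k → ℝ => (Matrix.vandermonde x).det ^ 2 := by
  simp only [Matrix.det_vandermonde]
  exact ContDiff.locallyLipschitz (𝕂 := ℝ) (by fun_prop)

lemma gammaK_succ (d : ℕ) (c : ℝ) :
    gammaK (d + 1) c =
      1 / (((d + 1).factorial : ℝ) * (∏ i ∈ Finset.range (d + 1), (Nat.factorial i : ℝ)) ^ 2) *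
        ∫ y in Dregion (d + 1) c, (Matrix.vandermonde (hyperplanePoint c y)).det ^ 2 := by
  simp only [gammaK, prod_lt_sub_sq_eq_det_vandermonde_sq, ← wFull_eq_hyperplanePoint]
  rfl

lemma sum_fin_val_mul_two (d : ℕ) : (∑ i : Fin (d + 1), (i : ℕ)) * 2 = (d + 1) * d := by
  rw [Fin.sum_univ_eq_sum_range (fun i => i), Finset.sum_range_id_mul_two, Nat.add_sub_cancel]

lemma det_vandermonde_sq_eq_mul_div {R : ℕ} (hR : 1 ≤ R) {d : ℕ} (m : Fin (d + 1) → ℕ) :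
    (Matrix.vandermonde fun i => (m i : ℝ)).det ^ 2 =
      (R : ℝ) ^ ((d + 1) * d) * (Matrix.vandermonde fun i => (m i : ℝ) / R).det ^ 2 := by
  have hR' : (R : ℝ) ≠ 0 := by positivity
  have hsmul : (fun i => (m i : ℝ)) = (R : ℝ) • fun i => (m i : ℝ) / R := by
    funext i
    simp [mul_div_cancel₀ _ hR']
  conv_lhs => rw [hsmul, det_vandermonde_smul, mul_pow, ← pow_mul, sum_fin_val_mul_two]

lemma volume_real_Dregion_one {c : ℝ} (hc : c ∈ Set.Icc 0 1) : volume.real (Dregion 1 c) = 1 := by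
  have huniv : Dregion 1 c = Set.univ := by
    refine Set.eq_univ_of_forall fun y => ⟨fun i => i.elim0, ?_⟩
    rwa [Fin.sum_univ_zero, sub_zero]
  simp [huniv, Measure.real, volume_pi]

lemma exists_abs_vandermondeSum_sub_setIntegral_le (d : ℕ) :
    ∃ C > 0, ∀ R n : ℕ, 1 ≤ R → n ≤ (d + 1) * R →
      |(∑ m : Fin (d + 1) → Fin (R + (d + 1)) with
            ∑ i, (m i : ℕ) = n + ∑ i : Fin (d + 1), (i : ℕ),
          (Matrix.vandermonde fun j => ((m j : ℕ) : ℝ) / R).det ^ 2) / (R : ℝ) ^ d -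
        ∫ y in Dregion (d + 1) ((n : ℝ) / R),
          (Matrix.vandermonde (hyperplanePoint ((n : ℝ) / R) y)).det ^ 2| ≤ C / R := by
  rcases d with _ | d
  · refine ⟨1, one_pos, fun R n hR hn => ?_⟩
    have hc : (n : ℝ) / R ∈ Set.Icc 0 1 :=
      ⟨by positivity, div_le_one_of_le₀ (by exact_mod_cast (by omega : n ≤ R)) (by positivity)⟩
    have hcard : ({m | (m 0 : ℕ) = n} : Finset (Fin 1 → Fin (R + 1))).card = 1 :=
      Finset.card_eq_one.2 ⟨fun _ => ⟨n, by omega⟩, by ext m; simp [funext_iff, Fin.ext_iff]⟩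
    simp [hcard, volume_real_Dregion_one hc]
  · obtain ⟨C, hC, h⟩ := exists_abs_latticeSum_sub_setIntegral_le
      (locallyLipschitz_det_vandermonde_sq (k := d + 2)) (∑ i : Fin (d + 2), (i : ℕ))
    exact ⟨C, hC, fun R n hR _ => h R n hR⟩

lemma matrixIntegral_sub_gammaK {d R n : ℕ} (hR : 1 ≤ R)
    (μ : Measure (Matrix.unitaryGroup (Fin R) ℂ)) [μ.IsHaarMeasure] [IsProbabilityMeasure μ] :
    matrixIntegral (d + 1) n R μ -
        gammaK (d + 1) ((n : ℝ) / R) * (R : ℝ) ^ (((d + 1 : ℕ) : ℝ) ^ 2 - 1) =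
      1 / (((d + 1).factorial : ℝ) * (∏ i ∈ Finset.range (d + 1), (Nat.factorial i : ℝ)) ^ 2) *
        ((∑ m : Fin (d + 1) → Fin (R + (d + 1)) with
              ∑ i, (m i : ℕ) = n + ∑ i : Fin (d + 1), (i : ℕ),
            (Matrix.vandermonde fun j => ((m j : ℕ) : ℝ) / R).det ^ 2) / (R : ℝ) ^ d -
          ∫ y in Dregion (d + 1) ((n : ℝ) / R),
            (Matrix.vandermonde (hyperplanePoint ((n : ℝ) / R) y)).det ^ 2) *
        (R : ℝ) ^ (((d + 1 : ℕ) : ℝ) ^ 2 - 1) := by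
  have : (0 : ℝ) < R := by positivity
  have hexp : (R : ℝ) ^ (((d + 1 : ℕ) : ℝ) ^ 2 - 1) = (R : ℝ) ^ ((d + 1) * d) * (R : ℝ) ^ d := by
    have hcast : ((d + 1 : ℕ) : ℝ) ^ 2 - 1 = ((d + 1) * d + d : ℕ) := by
      push_cast
      ring
    rw [hcast, Real.rpow_natCast, pow_add]
  rw [matrixIntegral_eq_latticeSum, gammaK_succ, hexp,
    Finset.sum_congr rfl fun m _ => det_vandermonde_sq_eq_mul_div hR fun i => (m i : ℕ),
    ← Finset.mul_sum]
  field_simp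

end Asymptotics

theorem I_k_asymptotic (k : ℕ) (hk : 1 ≤ k) :
    ∃ C > (0 : ℝ), ∀ R n : ℕ, 1 ≤ R → n ≤ k * R →
      ∀ (μ : Measure (Matrix.unitaryGroup (Fin R) ℂ)),
        μ.IsHaarMeasure → IsProbabilityMeasure μ →
        |matrixIntegral k n R μ - gammaK k ((n : ℝ) / R) * (R : ℝ) ^ ((k : ℝ) ^ 2 - 1)|
          ≤ C * (R : ℝ) ^ ((k : ℝ) ^ 2 - 2) := by
  obtain ⟨d, rfl⟩ := Nat.exists_eq_add_of_le' hk
  obtain ⟨C, hC, hsum⟩ := exists_abs_vandermondeSum_sub_setIntegral_le d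
  set κ : ℝ :=
    1 / (((d + 1).factorial : ℝ) * (∏ i ∈ Finset.range (d + 1), (Nat.factorial i : ℝ)) ^ 2)
  have hκ : 0 < κ := by positivity
  refine ⟨κ * C, by positivity, fun R n hR hn μ _ _ => ?_⟩
  have hR' : (0 : ℝ) < R := by positivity
  have hpow : (R : ℝ) ^ (((d + 1 : ℕ) : ℝ) ^ 2 - 2) =
      (R : ℝ) ^ (((d + 1 : ℕ) : ℝ) ^ 2 - 1) / R := by
    rw [← Real.rpow_sub_one hR'.ne', sub_sub, one_add_one_eq_two]
  rw [matrixIntegral_sub_gammaK hR μ, abs_mul, abs_mul, abs_of_pos hκ,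
    abs_of_pos (Real.rpow_pos_of_pos hR' _), hpow, ← mul_div_assoc, mul_div_right_comm,
    mul_div_assoc κ]
  gcongr
  exact hsum R n hR hn
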